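/- Let G = A₁ ∗_C A₋₁ be a word hyperbolic group which is the amalgamated free product of A₁ and A₋₁ along a virtually cyclic subgroup C, and let H be a finitely generated subgroup of G. Then H is quasiconvex in G if and only if for every g ∈ G and every i ∈ {1, −1} the subgroup g⁻¹Hg ∩ Aᵢ is quasiconvex in Aᵢ. -/

import Mathlib

universe u v w

section Defs

variable {G : Type u} [Group G]

/-- A finite generating set closed under inversion. -/
def IsSymmGen (X : Set G) : Prop :=
  X.Finite ∧ (∀ x ∈ X, x⁻¹ ∈ X) ∧ Subgroup.closure X = ⊤

/-- Word length of `g` with respect to `X`. -/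
noncomputable def wordLength (X : Set G) (g : G) : ℕ :=
  sInf {n : ℕ | ∃ l : List G, l.length = n ∧ (∀ x ∈ l, x ∈ X) ∧ l.prod = g}

/-- Word metric. -/
noncomputable def wordDist (X : Set G) (g h : G) : ℕ :=
  wordLength X (g⁻¹ * h)

/-- Gromov product with respect to the word metric. -/
noncomputable def gromovProd (X : Set G) (x y w : G) : ℝ :=
  ((wordDist X x w : ℝ) + (wordDist X y w : ℝ) - (wordDist X x y : ℝ)) / 2

end Defs

/-- A group is word hyperbolic if for some finite symmetric generating set the Gromov
product satisfies the hyperbolicity inequality. -/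
def IsWordHyperbolic (G : Type u) [Group G] : Prop :=
  ∃ X : Set G, IsSymmGen X ∧ ∃ δ : ℝ, 0 ≤ δ ∧
    ∀ x y z w : G,
      gromovProd X x z w ≥ min (gromovProd X x y w) (gromovProd X y z w) - δ

/-- A subgroup is quasiconvex: it is finitely generated and word lengths distort linearly. -/
def IsQuasiconvex {G : Type u} [Group G] (A : Subgroup G) : Prop :=
  ∃ Y : Set ↥A, IsSymmGen Y ∧ ∃ X : Set G, IsSymmGen X ∧ ∃ c : ℝ, 0 < c ∧
    ∀ a : ↥A, (wordLength Y a : ℝ) ≤ c * (wordLength X (a : G) : ℝ) + c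

/-- Property (Q): every finitely generated subgroup is quasiconvex. -/
def HasPropertyQ (G : Type u) [Group G] : Prop :=
  ∀ H : Subgroup G, H.FG → IsQuasiconvex H

/-- A group is virtually cyclic if it has a cyclic subgroup of finite index. -/
def IsVirtuallyCyclic (C : Type u) [Group C] : Prop :=
  ∃ Z : Subgroup C, IsCyclic ↥Z ∧ Z.FiniteIndex

/-- `G` is the amalgamated free product of its subgroups `A` and `B` along `C`:
`C = A ⊓ B`, `A ⊔ B = ⊤` and `G` has the pushout universal property. -/
structure IsAmalgamatedFreeProduct {G : Type u} [Group G] (A B C : Subgroup G) : Prop where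
  le_left : C ≤ A
  le_right : C ≤ B
  inf_eq : A ⊓ B = C
  sup_eq_top : A ⊔ B = ⊤
  univ : ∀ (K : Type u) [Group K] (f : ↥A →* K) (g : ↥B →* K),
    (∀ (c : G) (hA : c ∈ A) (hB : c ∈ B), f ⟨c, hA⟩ = g ⟨c, hB⟩) →
    ∃ h : G →* K, (∀ a : ↥A, h a = f a) ∧ (∀ b : ↥B, h b = g b)

section Words

variable {G : Type u} [Group G]

/-- A word over the alphabet `X`. -/
def IsWordOver (X : Set G) (l : List G) : Prop := ∀ x ∈ l, x ∈ X

/-- A geodesic word over `X`. -/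
def IsGeodesicWord (X : Set G) (l : List G) : Prop :=
  IsWordOver X l ∧ l.length = wordLength X l.prod

/-- A `lam`-quasigeodesic word over `X`: every subword `v` satisfies
`l(v) ≤ lam * l_X(v̄) + lam`. -/
def IsQuasigeodesicWord (X : Set G) (lam : ℝ) (l : List G) : Prop :=
  IsWordOver X l ∧
    ∀ v : List G, v <:+: l → (v.length : ℝ) ≤ lam * (wordLength X v.prod : ℝ) + lam

/-- `g` is a shortest element of the subset `S` with respect to `wordLength X`. -/
def ShortestIn (X : Set G) (g : G) (S : Set G) : Prop :=
  g ∈ S ∧ ∀ s ∈ S, wordLength X g ≤ wordLength X s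

end Words

/-- `G` together with `ια, ιβ` is the pushout of `ℤ → A, 1 ↦ x` and `ℤ → B, 1 ↦ y`. -/
structure IsAmalgamOverZ {A : Type u} {B : Type v} {G : Type w}
    [Group A] [Group B] [Group G]
    (ια : A →* G) (ιβ : B →* G) (x : A) (y : B) : Prop where
  comm : ια x = ιβ y
  gen : ια.range ⊔ ιβ.range = ⊤
  univ : ∀ (K : Type (max u v w)) [Group K] (f : A →* K) (g : B →* K),
    f x = g y → ∃ h : G →* K, h.comp ια = f ∧ h.comp ιβ = g

namespace WordLength

variable {G : Type*} [Group G]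

/-- A finite set closed under inversion. -/
structure IsFinSymm (Y : Set G) : Prop where
  finite : Y.Finite
  inv_mem : ∀ y ∈ Y, y⁻¹ ∈ Y

theorem IsFinSymm.union {Y Z : Set G} (hY : IsFinSymm Y) (hZ : IsFinSymm Z) :
    IsFinSymm (Y ∪ Z) :=
  ⟨hY.finite.union hZ.finite, fun y hy => hy.imp (hY.inv_mem y) (hZ.inv_mem y)⟩

theorem isFinSymm_union_inv {Y : Set G} (hY : Y.Finite) : IsFinSymm (Y ∪ Y⁻¹) :=
  ⟨hY.union hY.inv, fun y hy => by
    rcases hy with hy | hy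
    · exact Or.inr (by simpa using hy)
    · exact Or.inl hy⟩

theorem closure_union_inv (Y : Set G) :
    Subgroup.closure (Y ∪ Y⁻¹) = Subgroup.closure Y := by
  rw [Subgroup.closure_union, Subgroup.closure_inv, sup_idem]

theorem wordLength_prod_le {Y : Set G} {l : List G} (hl : ∀ x ∈ l, x ∈ Y) :
    wordLength Y l.prod ≤ l.length :=
  Nat.sInf_le ⟨l, rfl, hl, rfl⟩

theorem exists_word_of_mem_closure {Y : Set G} (hY : ∀ y ∈ Y, y⁻¹ ∈ Y) {g : G}
    (hg : g ∈ Subgroup.closure Y) : ∃ l : List G, (∀ x ∈ l, x ∈ Y) ∧ l.prod = g := by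
  rw [← Subgroup.mem_toSubmonoid, Subgroup.closure_toSubmonoid] at hg
  obtain ⟨l, hl, rfl⟩ := Submonoid.exists_list_of_mem_closure hg
  refine ⟨l, fun x hx => ?_, rfl⟩
  rcases hl x hx with h | h
  · exact h
  · simpa using hY _ h

theorem exists_geodesic_word {Y : Set G} (hY : IsFinSymm Y) {g : G}
    (hg : g ∈ Subgroup.closure Y) :
    ∃ l : List G, l.length = wordLength Y g ∧ (∀ x ∈ l, x ∈ Y) ∧ l.prod = g := by
  obtain ⟨l, hl, h⟩ := exists_word_of_mem_closure hY.inv_mem hg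
  exact Nat.sInf_mem (s := {n : ℕ | ∃ l : List G, l.length = n ∧ (∀ x ∈ l, x ∈ Y) ∧ l.prod = g})
    ⟨_, l, rfl, hl, h⟩

@[simp]
theorem wordLength_one (Y : Set G) : wordLength Y 1 = 0 :=
  Nat.le_zero.1 (wordLength_prod_le (Y := Y) (l := []) (by simp))

theorem wordLength_le_one {Y : Set G} {y : G} (hy : y ∈ Y) : wordLength Y y ≤ 1 := by
  simpa using wordLength_prod_le (Y := Y) (l := [y]) (by simpa using hy)

theorem wordLength_mul_le {Y : Set G} (hY : IsFinSymm Y) {g h : G}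
    (hg : g ∈ Subgroup.closure Y) (hh : h ∈ Subgroup.closure Y) :
    wordLength Y (g * h) ≤ wordLength Y g + wordLength Y h := by
  obtain ⟨l, hl, hlY, rfl⟩ := exists_geodesic_word hY hg
  obtain ⟨m, hm, hmY, rfl⟩ := exists_geodesic_word hY hh
  rw [← hl, ← hm, ← List.prod_append, ← List.length_append]
  exact wordLength_prod_le fun x hx => (List.mem_append.1 hx).elim (hlY x) (hmY x)

theorem wordLength_inv_le {Y : Set G} (hY : IsFinSymm Y) {g : G}
    (hg : g ∈ Subgroup.closure Y) : wordLength Y g⁻¹ ≤ wordLength Y g := by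
  obtain ⟨l, hl, hlY, rfl⟩ := exists_geodesic_word hY hg
  rw [← hl, List.prod_inv_reverse]
  refine (wordLength_prod_le fun x hx => ?_).trans (by simp)
  simp only [List.mem_reverse, List.mem_map] at hx
  obtain ⟨y, hy, rfl⟩ := hx
  exact hY.inv_mem y (hlY y hy)

theorem wordLength_inv {Y : Set G} (hY : IsFinSymm Y) {g : G}
    (hg : g ∈ Subgroup.closure Y) : wordLength Y g⁻¹ = wordLength Y g :=
  le_antisymm (wordLength_inv_le hY hg) (by simpa using wordLength_inv_le hY (inv_mem hg))

theorem eq_one_of_wordLength_eq_zero {Y : Set G} (hY : IsFinSymm Y) {g : G}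
    (hg : g ∈ Subgroup.closure Y) (h : wordLength Y g = 0) : g = 1 := by
  obtain ⟨l, hl, -, rfl⟩ := exists_geodesic_word hY hg
  simp [List.length_eq_zero_iff.1 (hl.trans h)]

theorem wordLength_list_prod_le {Y : Set G} (hY : IsFinSymm Y) {K : ℕ} {l : List G}
    (hl : ∀ x ∈ l, x ∈ Subgroup.closure Y ∧ wordLength Y x ≤ K) :
    wordLength Y l.prod ≤ K * l.length := by
  induction l with
  | nil => simp
  | cons a l ih =>
    have h1 := hl a (by simp)
    have h2 := ih fun x hx => hl x (by simp [hx])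
    have h3 := wordLength_mul_le hY h1.1
      (Subgroup.list_prod_mem _ fun x hx => (hl x (List.mem_cons_of_mem a hx)).1)
    rw [List.prod_cons, List.length_cons]
    nlinarith [h1.2]

/-- Word lengths for nested generating sets are comparable. -/
theorem exists_wordLength_le_mul {Y Z : Set G} (hY : IsFinSymm Y) (hZ : IsFinSymm Z)
    (h : Y ⊆ Subgroup.closure Z) :
    ∃ K : ℕ, ∀ g ∈ Subgroup.closure Y, wordLength Z g ≤ K * wordLength Y g := by
  obtain ⟨K, hK⟩ := (hY.finite.image (wordLength Z)).bddAbove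
  refine ⟨K, fun g hg => ?_⟩
  obtain ⟨l, hl, hlY, rfl⟩ := exists_geodesic_word hY hg
  rw [← hl]
  exact wordLength_list_prod_le hZ fun x hx => ⟨h (hlY x hx), hK ⟨x, hlY x hx, rfl⟩⟩

theorem exists_wordLength_split {Y : Set G} (hY : IsFinSymm Y) {g : G}
    (hg : g ∈ Subgroup.closure Y) {t : ℕ} (ht : t ≤ wordLength Y g) :
    ∃ a ∈ Subgroup.closure Y, wordLength Y a = t ∧ wordLength Y (a⁻¹ * g) = wordLength Y g - t := by
  obtain ⟨l, hl, hlY, rfl⟩ := exists_geodesic_word hY hg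
  have h1 : ∀ x ∈ l.take t, x ∈ Y := fun x hx => hlY x (List.mem_of_mem_take hx)
  have h2 : ∀ x ∈ l.drop t, x ∈ Y := fun x hx => hlY x (List.mem_of_mem_drop hx)
  have c1 : (l.take t).prod ∈ Subgroup.closure Y :=
    Subgroup.list_prod_mem _ fun x hx => Subgroup.subset_closure (h1 x hx)
  have c2 : (l.drop t).prod ∈ Subgroup.closure Y :=
    Subgroup.list_prod_mem _ fun x hx => Subgroup.subset_closure (h2 x hx)
  have e : (l.take t).prod * (l.drop t).prod = l.prod := List.prod_take_mul_prod_drop l t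
  have e' : (l.take t).prod⁻¹ * l.prod = (l.drop t).prod := by rw [← e]; group
  have b1 := wordLength_prod_le h1
  have b2 := wordLength_prod_le h2
  have b3 := wordLength_mul_le hY c1 c2
  rw [e] at b3
  rw [List.length_take] at b1
  rw [List.length_drop] at b2
  refine ⟨_, c1, ?_, ?_⟩
  · omega
  · rw [e']; omega

theorem finite_wordLength_le {Y : Set G} (hY : IsFinSymm Y) (n : ℕ) :
    {g | g ∈ Subgroup.closure Y ∧ wordLength Y g ≤ n}.Finite := by
  induction n with
  | zero =>
    refine (Set.finite_singleton (1 : G)).subset fun g hg => ?_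
    exact eq_one_of_wordLength_eq_zero hY hg.1 (Nat.le_zero.1 hg.2)
  | succ n ih =>
    refine ((Set.finite_singleton (1 : G)).union (hY.finite.mul ih)).subset fun g hg => ?_
    obtain ⟨hg, hgn⟩ := hg
    obtain ⟨l, hl, hlY, rfl⟩ := exists_geodesic_word hY hg
    cases l with
    | nil => left; simp
    | cons a l =>
      right
      refine ⟨a, hlY a (by simp), l.prod, ⟨?_, ?_⟩, by simp⟩
      · exact Subgroup.list_prod_mem _ fun x hx => Subgroup.subset_closure (hlY x (by simp [hx]))
      · have := wordLength_prod_le (Y := Y) (l := l) fun x hx => hlY x (by simp [hx])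
        rw [List.length_cons] at hl
        omega

/-- Word length is preserved by injective homomorphisms. -/
theorem wordLength_image {G' : Type*} [Group G'] (f : G' →* G) (hf : Function.Injective f)
    (Y : Set G') (g : G') : wordLength (f '' Y) (f g) = wordLength Y g := by
  unfold wordLength
  congr 1
  ext n
  constructor
  · rintro ⟨l, hl, hlY, h⟩
    choose! k hk using hlY
    refine ⟨l.map k, by simpa using hl, ?_, hf ?_⟩
    · intro x hx
      obtain ⟨y, hy, rfl⟩ := List.mem_map.1 hx
      exact (hk y hy).1
    · rw [map_list_prod, List.map_map, ← h]
      congr 1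
      conv_rhs => rw [← List.map_id l]
      exact List.map_congr_left fun x hx => (hk x hx).2
  · rintro ⟨l, hl, hlY, rfl⟩
    refine ⟨l.map f, by simpa using hl, ?_, (map_list_prod f l).symm⟩
    intro x hx
    obtain ⟨y, hy, rfl⟩ := List.mem_map.1 hx
    exact ⟨y, hlY y hy, rfl⟩

theorem IsFinSymm.image {G' : Type*} [Group G'] (f : G' →* G) {Y : Set G'} (hY : IsFinSymm Y) :
    IsFinSymm (f '' Y) :=
  ⟨hY.finite.image f, by
    rintro _ ⟨y, hy, rfl⟩
    exact ⟨y⁻¹, hY.inv_mem y hy, map_inv f y⟩⟩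

/-- The left invariant distance associated with a length function. -/
def ldist (L : G → ℕ) (x y : G) : ℕ := L (x⁻¹ * y)

/-- `x` lies on a geodesic from `a` to `b`. -/
def Btw (L : G → ℕ) (a x b : G) : Prop := ldist L a x + ldist L x b = ldist L a b

/-- A proper, discretely geodesic length function satisfying the four-point condition. -/
structure IsHypLength (L : G → ℕ) (D : ℕ) : Prop where
  one : L 1 = 0
  inv : ∀ g, L g⁻¹ = L g
  mul_le : ∀ g h, L (g * h) ≤ L g + L h
  finite_ball : ∀ n, {g | L g ≤ n}.Finite
  split : ∀ g t, t ≤ L g → ∃ a, L a = t ∧ L (a⁻¹ * g) = L g - t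
  eq_one : ∀ g, L g = 0 → g = 1
  four_point : ∀ x y z w,
    ldist L x z + ldist L y w ≤ ldist L x y + ldist L z w + D ∨
    ldist L x z + ldist L y w ≤ ldist L y z + ldist L x w + D

/-- `x` lies in the `R`-neighbourhood of the subgroup `P`. -/
def Near (L : G → ℕ) (R : ℕ) (P : Subgroup G) (x : G) : Prop := ∃ p ∈ P, ldist L x p ≤ R

/-- Geodesics joining points of `P` stay in a uniform neighbourhood of `P`. -/
def IsGeomQC (L : G → ℕ) (P : Subgroup G) : Prop :=
  ∃ R, ∀ p ∈ P, ∀ x, Btw L 1 x p → Near L R P x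

theorem isHypLength_wordLength {X : Set G} (hX : IsSymmGen X) {δ : ℝ}
    (h : ∀ x y z w : G,
      gromovProd X x z w ≥ min (gromovProd X x y w) (gromovProd X y z w) - δ) :
    ∃ D, IsHypLength (wordLength X) D := by
  have hs : IsFinSymm X := ⟨hX.1, hX.2.1⟩
  have hm : ∀ g : G, g ∈ Subgroup.closure X := fun g => by rw [hX.2.2]; trivial
  obtain ⟨D, hD⟩ := exists_nat_ge (2 * δ)
  have hinv : ∀ g, wordLength X g⁻¹ = wordLength X g := fun g => wordLength_inv hs (hm g)
  have hsym : ∀ x y, wordDist X x y = wordDist X y x := fun x y => by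
    unfold wordDist; rw [← hinv]; congr 1; group
  refine ⟨D, wordLength_one X, hinv,
    fun g h => wordLength_mul_le hs (hm g) (hm h), fun n => ?_, fun g t ht => ?_,
    fun g hg => eq_one_of_wordLength_eq_zero hs (hm g) hg, fun x y z w => ?_⟩
  · exact (finite_wordLength_le hs n).subset fun g hg => ⟨hm g, hg⟩
  · obtain ⟨a, -, ha⟩ := exists_wordLength_split hs (hm g) ht
    exact ⟨a, ha⟩
  · have h1 := h x y z w
    change wordDist X x z + wordDist X y w ≤ wordDist X x y + wordDist X z w + D ∨
      wordDist X x z + wordDist X y w ≤ wordDist X y z + wordDist X x w + D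
    unfold gromovProd at h1
    rcases min_choice (((wordDist X x w : ℝ) + wordDist X y w - wordDist X x y) / 2)
      (((wordDist X y w : ℝ) + wordDist X z w - wordDist X y z) / 2) with h2 | h2
    · left
      rw [h2] at h1
      exact_mod_cast (by linarith : (wordDist X x z : ℝ) + wordDist X y w ≤
        wordDist X x y + wordDist X z w + D)
    · right
      rw [h2] at h1
      exact_mod_cast (by linarith : (wordDist X x z : ℝ) + wordDist X y w ≤
        wordDist X y z + wordDist X x w + D)

namespace IsHypLength

variable {L : G → ℕ} {D : ℕ}

theorem ldist_comm (hL : IsHypLength L D) (x y : G) : ldist L x y = ldist L y x := by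
  unfold ldist; rw [← hL.inv]; congr 1; group

theorem ldist_triangle (hL : IsHypLength L D) (x y z : G) : ldist L x z ≤ ldist L x y + ldist L y z := by
  unfold ldist
  calc L (x⁻¹ * z) = L ((x⁻¹ * y) * (y⁻¹ * z)) := by congr 1; group
    _ ≤ _ := hL.mul_le _ _

theorem ldist_mul_left (g x y : G) : ldist L (g * x) (g * y) = ldist L x y := by
  unfold ldist; congr 1; group

theorem ldist_one_left (x : G) : ldist L 1 x = L x := by simp [ldist]

theorem ldist_self (hL : IsHypLength L D) (x : G) : ldist L x x = 0 := by simp [ldist, hL.one]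

theorem eq_of_ldist_eq_zero (hL : IsHypLength L D) {x y : G} (h : ldist L x y = 0) : x = y :=
  (inv_mul_eq_one.1 (hL.eq_one _ h))

theorem btw_mul_left {g a x b : G} : Btw L (g * a) (g * x) (g * b) ↔ Btw L a x b := by
  simp only [Btw, ldist_mul_left]

theorem btw_symm (hL : IsHypLength L D) {a x b : G} (h : Btw L a x b) : Btw L b x a := by
  unfold Btw at *
  rw [hL.ldist_comm b x, hL.ldist_comm x a, hL.ldist_comm b a]; omega

theorem exists_btw (hL : IsHypLength L D) (a b : G) {t : ℕ} (ht : t ≤ ldist L a b) :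
    ∃ x, Btw L a x b ∧ ldist L a x = t := by
  obtain ⟨y, hy, hy'⟩ := hL.split _ t ht
  refine ⟨a * y, ?_, by simpa [ldist] using hy⟩
  have e1 : ldist L a (a * y) = t := by simpa [ldist] using hy
  have e2 : ldist L (a * y) b = ldist L a b - t := by
    unfold ldist; rw [← hy']; congr 1; group
  unfold Btw; omega

/-- Synchronous fellow-travelling of geodesics with nearby endpoints. -/
theorem ldist_le_of_btw_of_btw (hL : IsHypLength L D) {a b a' b' x x' : G} {s : ℕ} (h : Btw L a x b)
    (h' : Btw L a' x' b') (e : ldist L a x = ldist L a' x') (ha : ldist L a a' ≤ s)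
    (hb : ldist L b b' ≤ s) : ldist L x x' ≤ 3 * s + D := by
  unfold Btw at *
  have h4 := hL.four_point a x b x'
  have t1 := hL.ldist_triangle b b' x'
  have t2 := hL.ldist_comm b' x'
  have t3 := hL.ldist_triangle a' a b'
  have t4 := hL.ldist_triangle a b b'
  have t5 := hL.ldist_comm a a'
  have t6 := hL.ldist_triangle a a' x'
  omega

theorem exists_btw_near_of_le (hL : IsHypLength L D) {a c x : G} {s : ℕ}
    (h : ldist L a x + ldist L x c ≤ ldist L a c + s) :
    ∃ y, Btw L a y c ∧ ldist L x y ≤ D + s := by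
  obtain ⟨y, hy, hy'⟩ := hL.exists_btw a c (t := min (ldist L a x) (ldist L a c)) (min_le_right _ _)
  refine ⟨y, hy, ?_⟩
  have h4 := hL.four_point a x c y
  have t1 := hL.ldist_comm c y
  have t2 := hL.ldist_comm c x
  have t3 := hL.ldist_triangle a x c
  unfold Btw at hy
  rcases le_total (ldist L a x) (ldist L a c) with h1 | h1
  · rw [min_eq_left h1] at hy'; omega
  · rw [min_eq_right h1] at hy'; omega

/-- Geodesic triangles are slim. -/
theorem slim_triangle (hL : IsHypLength L D) {a b x : G} (h : Btw L a x b) (c : G) :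
    ∃ y, (Btw L a y c ∨ Btw L c y b) ∧ ldist L x y ≤ 2 * D := by
  have h4 := hL.four_point a x b c
  have h4' := hL.four_point a c b x
  have t0 := hL.ldist_comm c x
  have t1 := hL.ldist_comm b c
  have t2 := hL.ldist_comm b x
  unfold Btw at h
  rcases hL.four_point a x b c with h4 | h4
  · obtain ⟨y, hy, hy'⟩ := hL.exists_btw_near_of_le (a := c) (c := b) (x := x) (s := D) (by omega)
    exact ⟨y, Or.inr hy, by omega⟩
  · obtain ⟨y, hy, hy'⟩ := hL.exists_btw_near_of_le (a := a) (c := c) (x := x) (s := D) (by omega)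
    exact ⟨y, Or.inl hy, by omega⟩

/-- Geodesic quadrilaterals are slim. -/
theorem slim_quadrilateral (hL : IsHypLength L D) {a b x : G} (h : Btw L a x b) (c d : G) :
    ∃ y, (Btw L a y c ∨ Btw L c y d ∨ Btw L d y b) ∧ ldist L x y ≤ 4 * D := by
  obtain ⟨y, hy | hy, hxy⟩ := hL.slim_triangle h c
  · exact ⟨y, Or.inl hy, by omega⟩
  · obtain ⟨z, hz, hyz⟩ := hL.slim_triangle hy d
    exact ⟨z, Or.inr hz, by have := hL.ldist_triangle x y z; omega⟩

theorem ldist_le_of_btw {a x b : G} (h : Btw L a x b) : ldist L a x ≤ ldist L a b := by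
  unfold Btw at h; omega

theorem eq_of_btw_self (hL : IsHypLength L D) {a x : G} (h : Btw L a x a) : x = a := by
  unfold Btw at h
  rw [hL.ldist_self] at h
  exact (hL.eq_of_ldist_eq_zero (by omega : ldist L a x = 0)).symm

theorem btw_trans_left (hL : IsHypLength L D) {a y x b : G} (h : Btw L a x b) (h' : Btw L a y x) :
    Btw L a y b ∧ Btw L y x b := by
  unfold Btw at *
  have := hL.ldist_triangle y x b
  have := hL.ldist_triangle a y b
  omega

/-- A geodesic stays logarithmically close to any path with the same endpoints. -/
theorem exists_near_path (hL : IsHypLength L D) {M : ℕ} (k : ℕ) : ∀ (f : ℕ → G) (n : ℕ), n ≤ 2 ^ k →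
    (∀ i < n, ldist L (f i) (f (i + 1)) ≤ M) → ∀ x, Btw L (f 0) x (f n) →
    ∃ i ≤ n, ldist L x (f i) ≤ 2 * D * k + M := by
  induction k with
  | zero =>
    intro f n hn hf x hx
    refine ⟨0, by omega, ?_⟩
    rw [hL.ldist_comm]
    refine (ldist_le_of_btw hx).trans ?_
    rcases (by simpa using hn : n ≤ 1).lt_or_eq with h | h
    · rw [Nat.lt_one_iff.1 h, hL.ldist_self]; omega
    · subst h; simpa using hf 0 (by omega)
  | succ k ih =>
    intro f n hn hf x hx
    rw [pow_succ] at hn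
    obtain ⟨y, hy | hy, hxy⟩ := hL.slim_triangle hx (f (n / 2))
    · obtain ⟨i, hi, hi'⟩ := ih f (n / 2) (by omega) (fun i hi => hf i (by omega)) y hy
      refine ⟨i, by omega, ?_⟩
      have := hL.ldist_triangle x y (f i)
      have e : 2 * D * (k + 1) = 2 * D * k + 2 * D := by ring
      omega
    · obtain ⟨i, hi, hi'⟩ := ih (fun j => f (n / 2 + j)) (n - n / 2) (by omega)
        (fun i hi => by simpa [add_assoc] using hf (n / 2 + i) (by omega)) y
        (by simpa [Nat.add_sub_cancel' (Nat.div_le_self n 2)] using hy)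
      refine ⟨n / 2 + i, by omega, ?_⟩
      have := hL.ldist_triangle x y (f (n / 2 + i))
      have e : 2 * D * (k + 1) = 2 * D * k + 2 * D := by ring
      omega

theorem exists_bound_of_two_pow_le_linear (a b : ℕ) :
    ∃ K : ℕ, ∀ k : ℕ, 2 ^ k ≤ a * k + b → k ≤ K := by
  have h := (tendsto_pow_const_div_const_pow_of_one_lt 1 (by norm_num : (1 : ℝ) < 2))
  have h0 := (tendsto_pow_const_div_const_pow_of_one_lt 0 (by norm_num : (1 : ℝ) < 2))
  have h1 := (h.const_mul (a : ℝ)).add (h0.const_mul (b : ℝ))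
  simp only [mul_zero, add_zero, pow_one, pow_zero] at h1
  obtain ⟨K, hK⟩ := Filter.eventually_atTop.1 (h1.eventually (gt_mem_nhds (zero_lt_one' ℝ)))
  refine ⟨K, fun k hk => ?_⟩
  by_contra hlt
  have := hK k (by omega)
  have hp : (0 : ℝ) < 2 ^ k := by positivity
  have e : (a : ℝ) * (k / 2 ^ k) + b * (1 / 2 ^ k) = (a * k + b) / 2 ^ k := by ring
  rw [e, div_lt_one hp] at this
  have hk' : (2 : ℝ) ^ k ≤ a * k + b := by exact_mod_cast hk
  linarith

theorem exists_bound_of_le_clog (a b c : ℕ) :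
    ∃ R : ℕ, ∀ r : ℕ, r ≤ a * Nat.clog 2 (b * r + b) + c → r ≤ R := by
  obtain ⟨K, hK⟩ := exists_bound_of_two_pow_le_linear (b * a) (b * (a + c) + b + 1)
  refine ⟨a * (K + 1) + c, fun r hr => hr.trans ?_⟩
  gcongr
  by_contra! hlt
  obtain ⟨k, hk⟩ : ∃ k, Nat.clog 2 (b * r + b) = k + 1 := ⟨_, (Nat.succ_pred (by omega)).symm⟩
  have h1 : 2 ^ k < b * r + b :=
    (Nat.lt_clog_iff_pow_lt (by norm_num)).1 (by omega)
  have h2 := hK k (by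
    rw [hk] at hr
    have : b * r ≤ b * (a * (k + 1) + c) := Nat.mul_le_mul_left b hr
    nlinarith)
  omega

/-- Stability of quasigeodesics: a geodesic stays uniformly close to any quasigeodesic path with
the same endpoints. -/
theorem morse (hL : IsHypLength L D) (K M : ℕ) : ∃ R, ∀ (f : ℕ → G) (n : ℕ),
    (∀ i < n, ldist L (f i) (f (i + 1)) ≤ M) →
    (∀ i j, i ≤ j → j ≤ n → j - i ≤ K * ldist L (f i) (f j) + K) →
    ∀ x, Btw L (f 0) x (f n) → ∃ i ≤ n, ldist L x (f i) ≤ R := by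
  obtain ⟨R, hR⟩ := exists_bound_of_le_clog (2 * D) (6 * K) (4 * D + M)
  refine ⟨max R (4 * D), fun f n hf hq => ?_⟩
  have hex : ∃ r, ∀ x, Btw L (f 0) x (f n) → ∃ i ≤ n, ldist L x (f i) ≤ r :=
    ⟨ldist L (f 0) (f n), fun x hx => ⟨0, by omega, by
      rw [hL.ldist_comm]; exact ldist_le_of_btw hx⟩⟩
  classical
  obtain ⟨hr, hmin⟩ := Nat.find_spec hex, fun m => @Nat.find_min _ _ hex m
  set r := Nat.find hex with hrdef
  suffices r ≤ max R (4 * D) by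
    intro x hx
    obtain ⟨i, hi, hi'⟩ := hr x hx
    exact ⟨i, hi, hi'.trans this⟩
  by_contra! hlt
  have hr4 : 4 * D < r := lt_of_le_of_lt (le_max_right _ _) hlt
  have hrR : R < r := lt_of_le_of_lt (le_max_left _ _) hlt
  have hm := hmin (r - 1) (by omega)
  push Not at hm
  obtain ⟨x, hx, hfar⟩ := hm
  have hfar' : ∀ i ≤ n, r ≤ ldist L x (f i) := fun i hi => by have := hfar i hi; omega
  -- the auxiliary points on either side of `x`
  have key : ∀ e, e ≤ n → (∀ y, Btw L (f e) y x → Btw L (f 0) y (f n)) →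
      ∃ y i, i ≤ n ∧ Btw L (f e) y x ∧ ldist L y x ≤ 2 * r ∧ ldist L y (f i) ≤ r ∧
        ∀ w, Btw L y w (f i) → r ≤ ldist L x w := by
    intro e he hb
    rcases le_total (ldist L (f e) x) (2 * r) with h | h
    · refine ⟨f e, e, he, ?_, h, by simp [hL.ldist_self], fun w hw => ?_⟩
      · simp [Btw, hL.ldist_self]
      · rw [hL.eq_of_btw_self hw]; exact hfar' e he
    · obtain ⟨y, hy, hy'⟩ := hL.exists_btw (f e) x (t := ldist L (f e) x - 2 * r) (by omega)
      obtain ⟨i, hi, hyi⟩ := hr y (hb y hy)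
      have hyx : ldist L y x = 2 * r := by unfold Btw at hy; omega
      refine ⟨y, i, hi, hy, hyx.le, hyi, fun w hw => ?_⟩
      have := hL.ldist_triangle y w x
      have := ldist_le_of_btw hw
      have := hL.ldist_comm w x
      omega
  obtain ⟨y, i, hi, hy, hyx, hyi, hyw⟩ := key 0 (by omega) fun y hy => (hL.btw_trans_left hx hy).1
  obtain ⟨z, j, hj, hz, hzx, hzj, hzw⟩ := key n le_rfl fun y hy =>
    hL.btw_symm (hL.btw_trans_left (hL.btw_symm hx) hy).1
  have hyxz : Btw L y x z := by
    have h1 := (hL.btw_trans_left hx hy).2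
    exact hL.btw_symm (hL.btw_trans_left (hL.btw_symm h1) hz).2
  obtain ⟨w, hw, hxw⟩ := hL.slim_quadrilateral hyxz (f i) (f j)
  rcases hw with hw | hw | hw
  · have := hyw w hw; omega
  · have main : ∀ i j, i ≤ j → j ≤ n → ldist L (f i) (f j) ≤ 6 * r → Btw L (f i) w (f j) →
        False := by
      intro i j hij hj hd hw
      have h1 := hq i j hij hj
      have h2 : j - i ≤ 6 * K * r + 6 * K := by
        have : K * ldist L (f i) (f j) ≤ K * (6 * r) := Nat.mul_le_mul_left _ hd
        nlinarith
      obtain ⟨m, hm, hm'⟩ := hL.exists_near_path (M := M) (Nat.clog 2 (6 * K * r + 6 * K))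
        (fun t => f (i + t)) (j - i) (h2.trans (Nat.le_pow_clog (by norm_num) _))
        (fun t ht => by simpa [add_assoc] using hf (i + t) (by omega)) w
        (by simpa [Nat.add_sub_cancel' hij] using hw)
      have h3 := hfar' (i + m) (by omega)
      have h4 := hL.ldist_triangle x w (f (i + m))
      have := hR r (by omega)
      omega
    have hd : ldist L (f i) (f j) ≤ 6 * r := by
      have := hL.ldist_triangle (f i) y (f j)
      have := hL.ldist_triangle y x (f j)
      have := hL.ldist_triangle x z (f j)
      have := hL.ldist_comm (f i) y
      have := hL.ldist_comm z x
      omega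
    rcases le_total i j with hij | hij
    · exact main i j hij hj hd hw
    · exact main j i hij hi (by rwa [hL.ldist_comm]) (hL.btw_symm hw)
  · have := hzw w (hL.btw_symm hw); omega

end IsHypLength

/-- `P` is finitely generated and undistorted with respect to the length function `L`. -/
def IsUndistorted (L : G → ℕ) (P : Subgroup G) : Prop :=
  ∃ Y : Set G, IsFinSymm Y ∧ Subgroup.closure Y = P ∧
    ∃ K : ℕ, ∀ p ∈ P, wordLength Y p ≤ K * L p + K

theorem exists_finite_of_relIndex_ne_zero {P Q : Subgroup G} (h : P.relIndex Q ≠ 0) :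
    ∃ F : Set G, F.Finite ∧ F ⊆ Q ∧ ∀ q ∈ Q, ∃ f ∈ F, ∃ p ∈ P, q = p * f := by
  have : (P.subgroupOf Q).FiniteIndex := ⟨h⟩
  refine ⟨Set.range fun c : Q ⧸ P.subgroupOf Q => ((c.out : Q) : G)⁻¹, Set.finite_range _, ?_, ?_⟩
  · rintro _ ⟨c, rfl⟩
    exact inv_mem c.out.2
  · intro q hq
    set c : Q ⧸ P.subgroupOf Q := QuotientGroup.mk (⟨q, hq⟩⁻¹ : Q) with hc
    refine ⟨_, ⟨c, rfl⟩, q * (c.out : Q), ?_, by group⟩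
    have h1 : (c.out)⁻¹ * (⟨q, hq⟩⁻¹ : Q) ∈ P.subgroupOf Q :=
      QuotientGroup.eq.1 (by rw [QuotientGroup.out_eq', hc])
    have h2 := inv_mem (Subgroup.mem_subgroupOf.1 h1)
    simpa using h2

/-- A generating set of a subgroup, viewed inside the subgroup. -/
theorem isSymmGen_preimage {Y : Set G} (hY : IsFinSymm Y) {P : Subgroup G}
    (h : Subgroup.closure Y = P) :
    IsSymmGen ((↑) ⁻¹' Y : Set P) ∧ ∀ p : P, wordLength ((↑) ⁻¹' Y : Set P) p = wordLength Y p := by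
  subst h
  refine ⟨⟨hY.finite.preimage Subtype.val_injective.injOn, fun x hx => hY.inv_mem _ hx,
    Subgroup.closure_closure_coe_preimage⟩, fun p => ?_⟩
  have h : (Subgroup.closure Y).subtype '' ((↑) ⁻¹' Y : Set (Subgroup.closure Y)) = Y := by
    ext y
    exact ⟨by rintro ⟨z, hz, rfl⟩; exact hz, fun hy => ⟨⟨y, Subgroup.subset_closure hy⟩, hy, rfl⟩⟩
  have h' := wordLength_image (Subgroup.closure Y).subtype Subtype.val_injective ((↑) ⁻¹' Y) p
  rw [h] at h'
  exact h'.symm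

theorem exists_hom_int_ne_one {M : Type*} [CommGroup M] [Group.FG M] {g : M}
    (hg : ¬ IsOfFinOrder g) : ∃ φ : M →* Multiplicative ℤ, φ g ≠ 1 := by
  let N := Additive M
  have : Module.Finite ℤ N := by
    rw [Module.Finite.iff_addGroup_fg]
    infer_instance
  let T := Submodule.torsion ℤ N
  have : Module.Free ℤ (N ⧸ T) := inferInstance
  let b := Module.Free.chooseBasis ℤ (N ⧸ T)
  have hne : (Submodule.Quotient.mk (Additive.ofMul g : N) : N ⧸ T) ≠ 0 := by
    rw [Ne, Submodule.Quotient.mk_eq_zero, Submodule.mem_torsion_iff]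
    rintro ⟨a, ha⟩
    refine hg (isOfFinOrder_iff_zpow_eq_one.2 ⟨a, nonZeroDivisors.coe_ne_zero a, ?_⟩)
    exact ha
  obtain ⟨i, hi⟩ : ∃ i, b.coord i (Submodule.Quotient.mk (Additive.ofMul g : N)) ≠ 0 := by
    by_contra! hcon
    exact hne (b.forall_coord_eq_zero_iff.1 hcon)
  refine ⟨AddMonoidHom.toMultiplicativeRight ((b.coord i).comp T.mkQ).toAddMonoidHom, fun h => hi ?_⟩
  exact h

namespace IsHypLength

variable {L : G → ℕ} {D : ℕ}

theorem list_prod_le (hL : IsHypLength L D) {M : ℕ} {l : List G} (hl : ∀ x ∈ l, L x ≤ M) :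
    L l.prod ≤ M * l.length := by
  induction l with
  | nil => simp [hL.one]
  | cons a l ih =>
    have h1 := hl a (by simp)
    have h2 := ih fun x hx => hl x (by simp [hx])
    have h3 := hL.mul_le a l.prod
    rw [List.prod_cons, List.length_cons]
    nlinarith

theorem exists_le_mul_wordLength (hL : IsHypLength L D) {Y : Set G} (hY : IsFinSymm Y) :
    ∃ M, (∀ y ∈ Y, L y ≤ M) ∧ ∀ g ∈ Subgroup.closure Y, L g ≤ M * wordLength Y g := by
  obtain ⟨M, hM⟩ := (hY.finite.image L).bddAbove
  refine ⟨M, fun y hy => hM ⟨y, hy, rfl⟩, fun g hg => ?_⟩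
  obtain ⟨l, hl, hlY, rfl⟩ := exists_geodesic_word hY hg
  rw [← hl]
  exact hL.list_prod_le fun x hx => hM ⟨x, hlY x hx, rfl⟩

theorem btw_trans_right (hL : IsHypLength L D) {a x y b : G} (h : Btw L a x b)
    (h' : Btw L x y b) : Btw L a y b :=
  hL.btw_symm (hL.btw_trans_left (hL.btw_symm h) (hL.btw_symm h')).1

theorem isUndistorted_of_isGeomQC (hL : IsHypLength L D) {P : Subgroup G}
    (hP : IsGeomQC L P) : IsUndistorted L P := by
  obtain ⟨R, hR⟩ := hP
  let Y : Set G := {p | p ∈ P ∧ L p ≤ 2 * R + 1}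
  have hY : IsFinSymm Y := ⟨(hL.finite_ball (2 * R + 1)).subset fun p hp => hp.2,
    fun p hp => ⟨inv_mem hp.1, by rw [hL.inv]; exact hp.2⟩⟩
  have key : ∀ p ∈ P, ∀ t ≤ L p, ∃ x q, Btw L 1 x p ∧ ldist L 1 x = t ∧ q ∈ P ∧
      ldist L x q ≤ R ∧ ∃ l : List G, l.length = t ∧ (∀ y ∈ l, y ∈ Y) ∧ l.prod = q := by
    intro p hp t
    induction t with
    | zero =>
      intro _
      refine ⟨1, 1, by simp [Btw, hL.ldist_self], hL.ldist_self 1, one_mem P, ?_, [], by simp⟩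
      simp [hL.ldist_self]
    | succ t ih =>
      intro ht
      obtain ⟨x, q, hx, hxt, hq, hxq, l, hlt, hlY, hlq⟩ := ih (by omega)
      have hxp : ldist L x p = L p - t := by
        unfold Btw at hx; rw [ldist_one_left p] at hx; omega
      obtain ⟨x', hx', hxx'⟩ := hL.exists_btw x p (t := 1) (by omega)
      have hx'p := hL.btw_trans_right hx hx'
      obtain ⟨q', hq', hxq'⟩ := hR p hp x' hx'p
      refine ⟨x', q', hx'p, ?_, hq', hxq', l ++ [q⁻¹ * q'], by simp [hlt], ?_, by simp [hlq]⟩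
      · unfold Btw at hx' hx'p
        rw [ldist_one_left p] at hx'p; omega
      · intro y hy
        rcases List.mem_append.1 hy with hy | hy
        · exact hlY y hy
        · rw [List.mem_singleton.1 hy]
          refine ⟨mul_mem (inv_mem hq) hq', ?_⟩
          have h1 := hL.ldist_triangle q x q'
          have h2 := hL.ldist_triangle x x' q'
          have h3 := hL.ldist_comm q x
          change ldist L q q' ≤ _
          omega
  have word : ∀ p ∈ P, ∃ l : List G, l.length = L p + 1 ∧ (∀ y ∈ l, y ∈ Y) ∧ l.prod = p := by
    intro p hp
    obtain ⟨x, q, hx, hxt, hq, hxq, l, hlt, hlY, hlq⟩ := key p hp _ le_rfl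
    have hxp : x = p := hL.eq_of_ldist_eq_zero (by
      unfold Btw at hx; rw [ldist_one_left p] at hx; omega)
    subst hxp
    refine ⟨l ++ [q⁻¹ * x], by simp [hlt], ?_, by simp [hlq]⟩
    intro y hy
    rcases List.mem_append.1 hy with hy | hy
    · exact hlY y hy
    · rw [List.mem_singleton.1 hy]
      refine ⟨mul_mem (inv_mem hq) hp, ?_⟩
      have h3 := hL.ldist_comm q x
      change ldist L q x ≤ _
      omega
  refine ⟨Y, hY, le_antisymm ((Subgroup.closure_le _).2 fun y hy => hy.1) fun p hp => ?_,
    1, fun p hp => ?_⟩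
  · obtain ⟨l, -, hlY, rfl⟩ := word p hp
    exact Subgroup.list_prod_mem _ fun y hy => Subgroup.subset_closure (hlY y hy)
  · obtain ⟨l, hl, hlY, hlp⟩ := word p hp
    have := wordLength_prod_le hlY
    rw [hlp] at this; omega

theorem isGeomQC_of_isUndistorted (hL : IsHypLength L D) {P : Subgroup G}
    (hP : IsUndistorted L P) : IsGeomQC L P := by
  obtain ⟨Y, hY, hYP, K, hK⟩ := hP
  obtain ⟨M, hM, -⟩ := hL.exists_le_mul_wordLength hY
  obtain ⟨R, hR⟩ := hL.morse K M
  refine ⟨R, fun p hp x hx => ?_⟩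
  obtain ⟨l, hl, hlY, rfl⟩ := exists_geodesic_word hY (by rwa [hYP])
  have mem : ∀ l' : List G, (∀ x ∈ l', x ∈ Y) → l'.prod ∈ Subgroup.closure Y := fun l' h =>
    Subgroup.list_prod_mem _ fun y hy => Subgroup.subset_closure (h y hy)
  have htake : ∀ i, ∀ x ∈ l.take i, x ∈ Y := fun i x hx => hlY x (List.mem_of_mem_take hx)
  have step : ∀ i, i < l.length → ldist L (l.take i).prod (l.take (i + 1)).prod ≤ M := by
    intro i hi
    have : ldist L (l.take i).prod (l.take (i + 1)).prod = L l[i] := by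
      unfold ldist
      rw [List.prod_take_succ l i hi]
      congr 1; group
    rw [this]
    exact hM _ (hlY _ (List.getElem_mem _))
  have qg : ∀ i j, i ≤ j → j ≤ l.length →
      j - i ≤ K * ldist L (l.take i).prod (l.take j).prod + K := by
    intro i j hij hj
    set d := (l.take i).prod⁻¹ * (l.take j).prod with hd
    have hdm : d ∈ Subgroup.closure Y := mul_mem (inv_mem (mem _ (htake i))) (mem _ (htake j))
    have h1 := hK d (hYP ▸ hdm)
    have h2 : l.prod = (l.take i).prod * d * (l.drop j).prod := by
      rw [hd, ← List.prod_take_mul_prod_drop l j]; group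
    have hdr : ∀ x ∈ l.drop j, x ∈ Y := fun x hx => hlY x (List.mem_of_mem_drop hx)
    have h3 := wordLength_mul_le hY (mul_mem (mem _ (htake i)) hdm) (mem _ hdr)
    have h4 := wordLength_mul_le hY (mem _ (htake i)) hdm
    have h5 := wordLength_prod_le (htake i)
    have h6 := wordLength_prod_le hdr
    rw [← h2] at h3
    rw [List.length_take] at h5
    rw [List.length_drop] at h6
    change j - i ≤ K * L d + K
    omega
  obtain ⟨i, -, hi⟩ := hR (fun i => (l.take i).prod) l.length step qg x (by simpa using hx)
  exact ⟨_, hYP ▸ mem _ (htake i), hi⟩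

theorem isGeomQC_inf (hL : IsHypLength L D) {P Q : Subgroup G} (hP : IsGeomQC L P)
    (hQ : IsGeomQC L Q) : IsGeomQC L (P ⊓ Q) := by
  obtain ⟨R, hR⟩ := hP
  obtain ⟨S, hS⟩ := hQ
  have hex : ∀ uv : G × G, ∃ w, (∃ w', uv.1⁻¹ * w' ∈ P ∧ uv.2⁻¹ * w' ∈ Q) →
      uv.1⁻¹ * w ∈ P ∧ uv.2⁻¹ * w ∈ Q := fun uv => by
    by_cases h : ∃ w', uv.1⁻¹ * w' ∈ P ∧ uv.2⁻¹ * w' ∈ Q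
    · exact ⟨h.choose, fun _ => h.choose_spec⟩
    · exact ⟨1, fun h' => (h h').elim⟩
  choose w hw using hex
  obtain ⟨B, hB⟩ := (((hL.finite_ball R).prod (hL.finite_ball S)).image fun uv => L (w uv)).bddAbove
  refine ⟨B, fun p hp x hx => ?_⟩
  obtain ⟨a, ha, hxa⟩ := hR p hp.1 x hx
  obtain ⟨b, hb, hxb⟩ := hS p hp.2 x hx
  have h := hw (x⁻¹ * a, x⁻¹ * b) ⟨x⁻¹ * p, by
    simpa [mul_assoc] using mul_mem (inv_mem ha) hp.1, by
    simpa [mul_assoc] using mul_mem (inv_mem hb) hp.2⟩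
  refine ⟨x * w (x⁻¹ * a, x⁻¹ * b), ⟨?_, ?_⟩, ?_⟩
  · simpa [mul_assoc] using mul_mem ha h.1
  · simpa [mul_assoc] using mul_mem hb h.2
  · have := hB ⟨(x⁻¹ * a, x⁻¹ * b), ⟨hxa, hxb⟩, rfl⟩
    simpa [ldist] using this

theorem isGeomQC_centralizer_singleton (hL : IsHypLength L D) (s : G) :
    IsGeomQC L (Subgroup.centralizer {s}) := by
  have hex : ∀ u : G, ∃ w, (∃ w', u * w' = w' * s) → u * w = w * s := fun u => by
    by_cases h : ∃ w', u * w' = w' * s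
    · exact ⟨h.choose, fun _ => h.choose_spec⟩
    · exact ⟨1, fun h' => (h h').elim⟩
  choose w hw using hex
  obtain ⟨B, hB⟩ := ((hL.finite_ball (3 * L s + D)).image fun u => L (w u)).bddAbove
  refine ⟨B, fun p hp x hx => ?_⟩
  have hps : p * s = s * p := (Subgroup.mem_centralizer_singleton_iff.1 hp)
  have hu : L (x⁻¹ * s * x) ≤ 3 * L s + D := by
    rw [mul_assoc]
    refine hL.ldist_le_of_btw_of_btw (a' := s * 1) (b' := s * p) hx (btw_mul_left.2 hx)
      (ldist_mul_left _ _ _).symm ?_ ?_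
    · simp [ldist]
    · rw [← hps]; simp [ldist]
  have h := hw (x⁻¹ * s * x) ⟨x⁻¹ * p, by
    rw [mul_assoc x⁻¹ p s, hps]; group⟩
  refine ⟨x * w (x⁻¹ * s * x), Subgroup.mem_centralizer_singleton_iff.2 ?_, ?_⟩
  · rw [mul_assoc, ← h]; group
  · have := hB ⟨_, hu, rfl⟩
    simpa [ldist] using this

theorem isGeomQC_centralizer (hL : IsHypLength L D) {S : Set G} (hS : S.Finite) :
    IsGeomQC L (Subgroup.centralizer S) := by
  induction S, hS using Set.Finite.induction_on with
  | empty =>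
    refine ⟨0, fun p _ x _ => ⟨x, ?_, by simp [hL.ldist_self]⟩⟩
    simp [Subgroup.mem_centralizer_iff]
  | @insert a S _ _ ih =>
    have : Subgroup.centralizer (insert a S) =
        Subgroup.centralizer {a} ⊓ Subgroup.centralizer S := by
      ext x; simp [Subgroup.mem_centralizer_iff]
    rw [this]
    exact hL.isGeomQC_inf (hL.isGeomQC_centralizer_singleton a) ih

/-- Infinite order elements have positive translation length. -/
theorem exists_natAbs_le_of_not_isOfFinOrder (hL : IsHypLength L D) {g : G}
    (hg : ¬ IsOfFinOrder g) : ∃ K : ℕ, ∀ n : ℤ, n.natAbs ≤ K * L (g ^ n) + K := by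
  obtain ⟨Y, hY, hYg, -⟩ := hL.isUndistorted_of_isGeomQC (hL.isGeomQC_centralizer_singleton g)
  let Z := Subgroup.centralizer (insert g Y)
  obtain ⟨W, hW, hWZ, K, hK⟩ := hL.isUndistorted_of_isGeomQC
    (hL.isGeomQC_centralizer (hY.finite.insert g))
  have hcl : ∀ z ∈ Z, ∀ x ∈ Subgroup.centralizer {g}, x * z = z * x := by
    intro z hz x hx
    rw [← hYg] at hx
    have : Subgroup.closure Y ≤ Subgroup.centralizer {z} := (Subgroup.closure_le _).2 fun y hy =>
      Subgroup.mem_centralizer_singleton_iff.2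
        (Subgroup.mem_centralizer_iff.1 hz y (Set.mem_insert_of_mem _ hy))
    exact Subgroup.mem_centralizer_singleton_iff.1 (this hx)
  have hZg : ∀ z ∈ Z, z ∈ Subgroup.centralizer {g} := fun z hz =>
    Subgroup.mem_centralizer_singleton_iff.2
      (Subgroup.mem_centralizer_iff.1 hz g (Set.mem_insert _ _)).symm
  have hgZ : g ∈ Z := by
    refine Subgroup.mem_centralizer_iff.2 fun y hy => ?_
    rcases hy with rfl | hy
    · rfl
    · have : y ∈ Subgroup.centralizer {g} := hYg ▸ Subgroup.subset_closure hy
      exact Subgroup.mem_centralizer_singleton_iff.1 this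
  let _ : CommGroup Z := { (inferInstance : Group Z) with
    mul_comm := fun a b => Subtype.ext (hcl b b.2 a (hZg a a.2)) }
  obtain ⟨hW1, hW2⟩ := isSymmGen_preimage hW hWZ
  have : Group.FG Z := Group.fg_iff.2 ⟨_, hW1.2.2, hW1.1⟩
  obtain ⟨φ, hφ⟩ := exists_hom_int_ne_one (g := (⟨g, hgZ⟩ : Z)) fun h =>
    hg (by simpa using MonoidHom.isOfFinOrder Z.subtype h)
  obtain ⟨B, hB⟩ := (hW1.1.image fun z => (φ z).toAdd.natAbs).bddAbove
  have hφB : ∀ z : Z, (φ z).toAdd.natAbs ≤ B * wordLength W z := by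
    intro z
    rw [← hW2]
    obtain ⟨l, hl, hlW, rfl⟩ := exists_geodesic_word ⟨hW1.1, hW1.2.1⟩
      (hW1.2.2 ▸ Subgroup.mem_top z : z ∈ Subgroup.closure _)
    rw [← hl]
    clear hl
    induction l with
    | nil => simp
    | cons a l ih =>
      have h1 := ih fun x hx => hlW x (by simp [hx])
      have h2 : (φ a).toAdd.natAbs ≤ B := hB ⟨a, hlW a (by simp), rfl⟩
      rw [List.prod_cons, map_mul, toAdd_mul, List.length_cons]
      refine (Int.natAbs_add_le _ _).trans ?_
      nlinarith
  refine ⟨B * K, fun n => ?_⟩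
  have h1 := hφB (⟨g, hgZ⟩ ^ n)
  have h2 := hK (g ^ n) (zpow_mem hgZ n)
  have h3 : n.natAbs ≤ (φ (⟨g, hgZ⟩ ^ n)).toAdd.natAbs := by
    rw [map_zpow, toAdd_zpow, smul_eq_mul, Int.natAbs_mul]
    refine Nat.le_mul_of_pos_right _ (Int.natAbs_pos.2 fun h => hφ ?_)
    exact h
  have h4 : B * wordLength W (g ^ n) ≤ B * (K * L (g ^ n) + K) := Nat.mul_le_mul_left _ h2
  have h5 : ((⟨g, hgZ⟩ ^ n : Z) : G) = g ^ n := by simp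
  rw [h5] at h1
  calc n.natAbs ≤ B * (K * L (g ^ n) + K) := h3.trans (h1.trans h4)
    _ = _ := by ring

end IsHypLength

theorem wordLength_anti {Y Z : Set G} (hY : IsFinSymm Y) (h : Y ⊆ Z) {g : G}
    (hg : g ∈ Subgroup.closure Y) : wordLength Z g ≤ wordLength Y g := by
  obtain ⟨l, hl, hlY, rfl⟩ := exists_geodesic_word hY hg
  exact hl ▸ wordLength_prod_le fun x hx => h (hlY x hx)

theorem relIndex_ne_zero_of_finite {P Q : Subgroup G} {F : Set G} (hF : F.Finite)
    (h : ∀ q ∈ Q, ∃ f ∈ F, ∃ p ∈ P, q = p * f) : P.relIndex Q ≠ 0 := by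
  have : Finite F := hF
  choose! f hf p hp hq using h
  have hfin : Finite (Q ⧸ P.subgroupOf Q) := by
    refine Finite.of_injective (β := F) (fun c => ⟨f ((c.out : Q) : G)⁻¹, hf _ (inv_mem c.out.2)⟩) ?_
    intro c c' hcc
    have hcc' : f ((c.out : Q) : G)⁻¹ = f ((c'.out : Q) : G)⁻¹ := congrArg Subtype.val hcc
    rw [← QuotientGroup.out_eq' c, ← QuotientGroup.out_eq' c']
    refine QuotientGroup.eq.2 (Subgroup.mem_subgroupOf.2 ?_)
    have h1 := hq _ (inv_mem c.out.2)
    have h2 := hq _ (inv_mem c'.out.2)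
    rw [← hcc'] at h2
    have h3 : ((c.out : Q) : G)⁻¹ * ((c'.out : Q) : G) =
        p ((c.out : Q) : G)⁻¹ * (p ((c'.out : Q) : G)⁻¹)⁻¹ := by
      rw [← inv_inv ((c'.out : Q) : G)]
      nth_rewrite 1 [h1]
      nth_rewrite 1 [h2]
      simp
    rw [Subgroup.coe_mul, Subgroup.coe_inv, h3]
    exact mul_mem (hp _ (inv_mem c.out.2)) (inv_mem (hp _ (inv_mem c'.out.2)))
  exact Subgroup.index_ne_zero_of_finite

theorem relIndex_zpowers_zpow_ne_zero (z : G) {n : ℤ} (hn : n ≠ 0) :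
    (Subgroup.zpowers (z ^ n)).relIndex (Subgroup.zpowers z) ≠ 0 := by
  refine relIndex_ne_zero_of_finite (F := (fun k : ℤ => z ^ k) '' Set.Ico 0 |n|)
    ((Set.finite_Ico _ _).image _) ?_
  rintro _ ⟨k, rfl⟩
  refine ⟨_, ⟨k % n, ⟨Int.emod_nonneg _ hn, Int.emod_lt_abs _ hn⟩, rfl⟩, (z ^ n) ^ (k / n),
    ⟨k / n, rfl⟩, ?_⟩
  change z ^ k = (z ^ n) ^ (k / n) * z ^ (k % n)
  rw [← zpow_mul, ← zpow_add, Int.mul_ediv_add_emod]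

theorem relIndex_ne_zero_of_infinite {C Q : Subgroup G} {z : G}
    (hz : (Subgroup.zpowers z).relIndex C ≠ 0) (hQC : Q ≤ C) (hQ : (Q : Set G).Infinite) :
    Q.relIndex C ≠ 0 := by
  obtain ⟨F, hF, -, hFQ⟩ := exists_finite_of_relIndex_ne_zero
    (fun h => hz (Subgroup.relIndex_eq_zero_of_le_right hQC h) :
      (Subgroup.zpowers z).relIndex Q ≠ 0)
  have : ∃ n : ℤ, n ≠ 0 ∧ z ^ n ∈ Q := by
    by_contra! hcon
    choose! f hf p hp hq using hFQ
    refine hQ (Set.Finite.of_finite_image (f := f) (hF.subset ?_) ?_)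
    · rintro _ ⟨q, hq', rfl⟩
      exact hf q hq'
    · intro q hq1 q' hq2 hqq
      obtain ⟨n, hn⟩ := mul_mem (hp q hq1) (inv_mem (hp q' hq2))
      have h1 : q * q'⁻¹ = z ^ n := by
        change z ^ n = _ at hn
        rw [hn]
        nth_rewrite 1 [hq q hq1]
        nth_rewrite 1 [hq q' hq2]
        rw [hqq]; group
      by_contra hne
      refine hcon n (fun h0 => hne ?_) (h1 ▸ mul_mem hq1 (inv_mem hq2))
      rw [h0, zpow_zero] at h1
      exact mul_inv_eq_one.1 h1
  obtain ⟨n, hn, hnQ⟩ := this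
  have h1 : (Subgroup.zpowers (z ^ n)).relIndex C ≠ 0 :=
    Subgroup.relIndex_ne_zero_trans (relIndex_zpowers_zpow_ne_zero z hn) hz
  exact fun h => h1 (Subgroup.relIndex_eq_zero_of_le_left (Subgroup.zpowers_le.2 hnQ) h)

/-- The conjugate subgroup `g P g⁻¹`. -/
def conjSubgroup (g : G) (P : Subgroup G) : Subgroup G := P.map (MulAut.conj g).toMonoidHom

theorem mem_conjSubgroup {g x : G} {P : Subgroup G} : x ∈ conjSubgroup g P ↔ g⁻¹ * x * g ∈ P := by
  refine ⟨?_, fun h => ⟨_, h, by simp [mul_assoc]⟩⟩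
  rintro ⟨p, hp, rfl⟩
  simpa [mul_assoc] using hp

theorem IsVirtuallyCyclic.exists_zpowers {C : Subgroup G} (hC : IsVirtuallyCyclic C) :
    ∃ z ∈ C, (Subgroup.zpowers z).relIndex C ≠ 0 := by
  obtain ⟨Z, hZ, hZi⟩ := hC
  obtain ⟨z, hz⟩ := (Subgroup.isCyclic_iff_exists_zpowers_eq_top Z).1 hZ
  refine ⟨z, z.2, ?_⟩
  have h : (Subgroup.zpowers (z : G)).subgroupOf C = Z := by
    rw [← hz]
    have : Subgroup.zpowers (z : G) = (Subgroup.zpowers z).map C.subtype := by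
      rw [MonoidHom.map_zpowers]; rfl
    rw [this, Subgroup.subgroupOf, Subgroup.comap_map_eq_self_of_injective Subtype.val_injective]
  rw [Subgroup.relIndex, h]
  exact hZi.index_ne_zero

namespace IsHypLength

variable {L : G → ℕ} {D : ℕ}

theorem isUndistorted_of_relIndex_ne_zero (hL : IsHypLength L D) {P Q : Subgroup G} (hPQ : P ≤ Q)
    (h : P.relIndex Q ≠ 0) (hP : IsUndistorted L P) : IsUndistorted L Q := by
  obtain ⟨F, hF, hFQ, hFP⟩ := exists_finite_of_relIndex_ne_zero h
  obtain ⟨Y, hY, rfl, K, hK⟩ := hP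
  have hF' := isFinSymm_union_inv hF
  have hZ := hY.union hF'
  have hcl : ∀ f ∈ F, f ∈ Subgroup.closure (Y ∪ (F ∪ F⁻¹)) := fun f hf =>
    Subgroup.subset_closure (Or.inr (Or.inl hf))
  have hcY : Subgroup.closure Y ≤ Subgroup.closure (Y ∪ (F ∪ F⁻¹)) :=
    Subgroup.closure_mono Set.subset_union_left
  obtain ⟨M, hM⟩ := (hF.image L).bddAbove
  refine ⟨Y ∪ (F ∪ F⁻¹), hZ, le_antisymm ((Subgroup.closure_le _).2 ?_) fun q hq => ?_,
    K * M + K + 1, fun q hq => ?_⟩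
  · rintro x (hx | hx | hx)
    · exact hPQ (Subgroup.subset_closure hx)
    · exact hFQ hx
    · simpa using Q.inv_mem (hFQ hx)
  · obtain ⟨f, hf, p, hp, rfl⟩ := hFP q hq
    exact mul_mem (hcY hp) (hcl f hf)
  · obtain ⟨f, hf, p, hp, rfl⟩ := hFP q hq
    have h1 := wordLength_mul_le hZ (hcY hp) (hcl f hf)
    have h2 := wordLength_le_one (Y := Y ∪ (F ∪ F⁻¹)) (Or.inr (Or.inl hf))
    have h3 := wordLength_anti hY (Z := Y ∪ (F ∪ F⁻¹)) Set.subset_union_left hp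
    have h4 := hK p hp
    have h5 : L f ≤ M := hM ⟨f, hf, rfl⟩
    have h6 := hL.mul_le (p * f) f⁻¹
    rw [mul_inv_cancel_right, hL.inv] at h6
    nlinarith [Nat.zero_le (L (p * f)), Nat.zero_le K, Nat.zero_le M,
      Nat.mul_le_mul_left K (h6.trans (Nat.add_le_add_left h5 _)),
      Nat.zero_le (K * M * L (p * f))]

theorem isUndistorted_zpowers (hL : IsHypLength L D) (g : G) :
    IsUndistorted L (Subgroup.zpowers g) := by
  by_cases hg : IsOfFinOrder g
  · refine hL.isUndistorted_of_relIndex_ne_zero bot_le ?_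
      ⟨∅, ⟨Set.finite_empty, by simp⟩, by simp, 0, ?_⟩
    · refine relIndex_ne_zero_of_finite (F := Subgroup.zpowers g) ?_ fun q hq =>
        ⟨q, hq, 1, one_mem _, by simp⟩
      exact finite_zpowers.2 hg
    · intro p hp
      rw [Subgroup.mem_bot.1 hp, wordLength_one]; simp
  · obtain ⟨K, hK⟩ := hL.exists_natAbs_le_of_not_isOfFinOrder hg
    have hY : IsFinSymm ({g} ∪ {g}⁻¹ : Set G) := isFinSymm_union_inv (Set.finite_singleton g)
    refine ⟨{g} ∪ {g}⁻¹, hY, ?_, K, ?_⟩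
    · rw [closure_union_inv, Subgroup.zpowers_eq_closure]
    · rintro _ ⟨n, rfl⟩
      refine le_trans ?_ (hK n)
      rcases n.natAbs_eq with hn | hn
      · have := wordLength_prod_le (Y := ({g} ∪ {g}⁻¹ : Set G)) (l := List.replicate n.natAbs g)
          fun x hx => Or.inl (List.eq_of_mem_replicate hx)
        rw [List.prod_replicate, List.length_replicate, ← zpow_natCast, ← hn] at this
        exact this
      · have := wordLength_prod_le (Y := ({g} ∪ {g}⁻¹ : Set G)) (l := List.replicate n.natAbs g⁻¹)
          fun x hx => Or.inr (by rw [List.eq_of_mem_replicate hx]; exact Set.inv_mem_inv.2 rfl)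
        rw [List.prod_replicate, List.length_replicate, inv_pow, ← zpow_natCast, ← zpow_neg,
          ← hn] at this
        exact this

theorem isUndistorted_conjSubgroup (hL : IsHypLength L D) {P : Subgroup G}
    (hP : IsUndistorted L P) (g : G) : IsUndistorted L (conjSubgroup g P) := by
  obtain ⟨Y, hY, rfl, K, hK⟩ := hP
  refine ⟨(MulAut.conj g).toMonoidHom '' Y, hY.image _, (MonoidHom.map_closure _ _).symm,
    K * (2 * L g) + K, ?_⟩
  rintro _ ⟨p, hp, rfl⟩
  rw [wordLength_image _ (MulAut.conj g).injective]
  have h1 := hK p hp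
  have h2 := hL.mul_le (g⁻¹ * (MulAut.conj g).toMonoidHom p) g
  have h3 := hL.mul_le g⁻¹ ((MulAut.conj g).toMonoidHom p)
  have h4 : g⁻¹ * (MulAut.conj g).toMonoidHom p * g = p := by simp [mul_assoc]
  rw [h4] at h2
  rw [hL.inv] at h3
  set m := L ((MulAut.conj g).toMonoidHom p)
  have h5 : L p ≤ m + 2 * L g := by omega
  nlinarith [Nat.mul_le_mul_left K h5, Nat.zero_le (K * L g * m), Nat.zero_le K]

/-- Neighbourhoods of subgroups with finite intersection meet in a finite set. -/
theorem finite_near_near (hL : IsHypLength L D) {P Q : Subgroup G}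
    (h : ((P ⊓ Q : Subgroup G) : Set G).Finite) (R S : ℕ) :
    {x | Near L R P x ∧ Near L S Q x}.Finite := by
  have hex : ∀ uv : G × G, ∃ w, (∃ w', w' * uv.1 ∈ P ∧ w' * uv.2 ∈ Q) →
      w * uv.1 ∈ P ∧ w * uv.2 ∈ Q := fun uv => by
    by_cases h : ∃ w', w' * uv.1 ∈ P ∧ w' * uv.2 ∈ Q
    · exact ⟨h.choose, fun _ => h.choose_spec⟩
    · exact ⟨1, fun h' => (h h').elim⟩
  choose w hw using hex
  refine (h.image2 (· * ·) (((hL.finite_ball R).prod (hL.finite_ball S)).image w)).subset ?_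
  rintro x ⟨⟨p, hp, hxp⟩, q, hq, hxq⟩
  obtain ⟨h1, h2⟩ := hw (x⁻¹ * p, x⁻¹ * q) ⟨x, by simpa using hp, by simpa using hq⟩
  refine ⟨x * (w (x⁻¹ * p, x⁻¹ * q))⁻¹, ⟨?_, ?_⟩, _, ⟨(x⁻¹ * p, x⁻¹ * q), ⟨hxp, hxq⟩, rfl⟩, by simp⟩
  · have := mul_mem hp (inv_mem h1)
    simpa [mul_assoc] using this
  · have := mul_mem hq (inv_mem h2)
    simpa [mul_assoc] using this

end IsHypLength

open scoped Pointwise in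
theorem toConjAct_smul_eq_conjSubgroup (g : G) (P : Subgroup G) :
    ConjAct.toConjAct g • P = conjSubgroup g P := by
  ext x
  rw [mem_conjSubgroup, Subgroup.mem_pointwise_smul_iff_inv_smul_mem, ← ConjAct.toConjAct_inv,
    ConjAct.toConjAct_smul, inv_inv]

theorem relIndex_conjSubgroup_ne_zero {P Q : Subgroup G} (h : P.relIndex Q ≠ 0) (g : G) :
    (conjSubgroup g P).relIndex (conjSubgroup g Q) ≠ 0 := by
  obtain ⟨F, hF, -, hFP⟩ := exists_finite_of_relIndex_ne_zero h
  refine relIndex_ne_zero_of_finite (F := (fun f => g * f * g⁻¹) '' F) (hF.image _) fun q hq => ?_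
  obtain ⟨f, hf, p, hp, hq'⟩ := hFP _ (mem_conjSubgroup.1 hq)
  refine ⟨_, ⟨f, hf, rfl⟩, g * p * g⁻¹, mem_conjSubgroup.2 (by simpa [mul_assoc] using hp), ?_⟩
  rw [show q = g * (g⁻¹ * q * g) * g⁻¹ by group, hq']
  simp [mul_assoc]

/-- `E` contains `C` as a subgroup of finite index, and `C` meets its translates by elements
outside `E` in finite subgroups. -/
structure IsElementaryHull (C E : Subgroup G) : Prop where
  le : C ≤ E
  relIndex_ne_zero : C.relIndex E ≠ 0
  finite_inf : ∀ g ∉ E, ((C ⊓ conjSubgroup g C : Subgroup G) : Set G).Finite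

namespace IsHypLength

variable {L : G → ℕ} {D : ℕ}

theorem near_of_near (hL : IsHypLength L D) {R S : ℕ} {P : Subgroup G} {x y : G}
    (h : Near L R P y) (hxy : ldist L x y ≤ S) : Near L (S + R) P x := by
  obtain ⟨p, hp, h⟩ := h
  exact ⟨p, hp, (hL.ldist_triangle x y p).trans (add_le_add hxy h)⟩

theorem exists_isElementaryHull (hL : IsHypLength L D) {C : Subgroup G} {z : G}
    (hz : (Subgroup.zpowers z).relIndex C ≠ 0) (hC : IsGeomQC L C) :
    ∃ E, IsElementaryHull C E := by
  by_cases hfin : (C : Set G).Finite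
  · exact ⟨C, le_rfl, by simp, fun g _ => hfin.subset inf_le_left⟩
  have hinf : (C : Set G).Infinite := hfin
  set E := Subgroup.Commensurable.commensurator C with hE
  have mem_E : ∀ g, g ∈ E ↔ Subgroup.Commensurable (conjSubgroup g C) C := fun g => by
    rw [hE, Subgroup.Commensurable.commensurator_mem_iff, toConjAct_smul_eq_conjSubgroup]
  have hCE : C ≤ E := fun c hc => by
    have : conjSubgroup c C = C := by
      ext x
      rw [mem_conjSubgroup, mul_mem_cancel_right hc, mul_mem_cancel_left (inv_mem hc)]
    rw [mem_E, this]
  refine ⟨E, hCE, ?_, fun g hg => ?_⟩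
  · obtain ⟨R, hR⟩ := hC
    have hex : ∀ f : G, ∃ F : Set G, F.Finite ∧ (f ∈ E → ∀ c ∈ C, ∃ k ∈ F,
        ∃ p ∈ conjSubgroup f C, c = p * k) := fun f => by
      by_cases hf : f ∈ E
      · obtain ⟨F, hF, -, hF'⟩ := exists_finite_of_relIndex_ne_zero ((mem_E f).1 hf).1
        exact ⟨F, hF, fun _ => hF'⟩
      · exact ⟨∅, Set.finite_empty, fun h => (hf h).elim⟩
    choose F hF hF' using hex
    let B := {b : G | L b ≤ R + (4 * D + R)}
    have hB : B.Finite := hL.finite_ball _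
    refine relIndex_ne_zero_of_finite (F := ⋃ f ∈ B, (fun k => f⁻¹ * k) '' F f)
      (hB.biUnion fun f _ => (hF f).image _) fun g' hg' => ?_
    obtain ⟨g, rfl⟩ : ∃ g, g' = g⁻¹ := ⟨g'⁻¹, by simp⟩
    have hg : g ∈ E := by simpa using inv_mem hg'
    -- a long element of `C ⊓ g C g⁻¹`
    obtain ⟨q, ⟨hqC, hqg⟩, hqL⟩ : ∃ q ∈ C ⊓ conjSubgroup g C, 2 * (L g + 4 * D) + 2 ≤ L q := by
      by_contra! hcon
      have hI : ((C ⊓ conjSubgroup g C : Subgroup G) : Set G).Finite :=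
        (hL.finite_ball (2 * (L g + 4 * D) + 2)).subset fun q hq => (hcon q hq).le
      obtain ⟨F'', hF''1, -, hF''2⟩ := exists_finite_of_relIndex_ne_zero
        (P := C ⊓ conjSubgroup g C) (Q := C) (by
          rw [Subgroup.inf_relIndex_left]; exact ((mem_E g).1 hg).1)
      refine hinf ((hI.image2 (· * ·) hF''1).subset fun c hc => ?_)
      obtain ⟨f, hf, p, hp, rfl⟩ := hF''2 c hc
      exact ⟨p, hp, f, hf, rfl⟩
    have hc' := mem_conjSubgroup.1 hqg
    obtain ⟨x, hx, hxt⟩ := hL.exists_btw 1 q (t := L g + 4 * D + 1) (by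
      rw [ldist_one_left]; omega)
    have hxq : L g + 4 * D + 1 ≤ ldist L x q := by
      have := hx; unfold Btw at this; rw [ldist_one_left q] at this; omega
    have key : ∃ y, Btw L g y (q * g) ∧ ldist L x y ≤ 4 * D := by
      obtain ⟨y, hy | hy | hy, hxy⟩ := hL.slim_quadrilateral hx g (q * g)
      · have h1 := ldist_le_of_btw hy
        have h2 := hL.ldist_triangle 1 y x
        have h3 := hL.ldist_comm x y
        rw [ldist_one_left g] at h1; omega
      · exact ⟨y, hy, hxy⟩
      · have h1 := ldist_le_of_btw (hL.btw_symm hy)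
        have h2 := hL.ldist_triangle x y q
        have h3 := hL.ldist_comm q y
        have h4 : ldist L q (q * g) = L g := by simp [ldist]
        omega
    obtain ⟨y, hy, hxy⟩ := key
    obtain ⟨c, hc, hxc⟩ := hR q hqC x hx
    obtain ⟨c₂, hc₂, hyc⟩ := hR _ hc' (g⁻¹ * y) (by
      rw [← btw_mul_left (g := g)]; simpa [mul_assoc] using hy)
    have hyc' : ldist L y (g * c₂) ≤ R := by
      rw [← ldist_mul_left g, mul_inv_cancel_left] at hyc; exact hyc
    set f := c⁻¹ * (g * c₂) with hf
    have hfB : f ∈ B := by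
      have h1 := hL.ldist_triangle c x (g * c₂)
      have h2 := hL.ldist_triangle x y (g * c₂)
      have h3 := hL.ldist_comm c x
      change ldist L c (g * c₂) ≤ _
      omega
    have hfE : f ∈ E := mul_mem (inv_mem (hCE hc)) (mul_mem hg (hCE hc₂))
    obtain ⟨k, hk, p, hp, hck⟩ := hF' f hfE c⁻¹ (inv_mem hc)
    refine ⟨f⁻¹ * k, Set.mem_biUnion hfB ⟨k, hk, rfl⟩, c₂ * (f⁻¹ * p * f),
      mul_mem hc₂ (mem_conjSubgroup.1 hp), ?_⟩
    rw [show c₂ * (f⁻¹ * p * f) * (f⁻¹ * k) = c₂ * f⁻¹ * (p * k) by group, ← hck, hf]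
    group
  · by_contra hI
    have hz' : (Subgroup.zpowers (g * z * g⁻¹)).relIndex (conjSubgroup g C) ≠ 0 := by
      have := relIndex_conjSubgroup_ne_zero hz g
      rw [conjSubgroup, MonoidHom.map_zpowers] at this
      exact this
    refine hg ((mem_E g).2 ⟨?_, ?_⟩)
    · rw [← Subgroup.inf_relIndex_left]
      exact relIndex_ne_zero_of_infinite hz inf_le_left hI
    · rw [← Subgroup.inf_relIndex_right]
      exact relIndex_ne_zero_of_infinite hz' inf_le_right hI

end IsHypLength

namespace IsHypLength

variable {L : G → ℕ} {D : ℕ}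

/-- Translates of `C` by elements outside its elementary hull have uniformly bounded coarse
intersection with `C`. -/
theorem exists_ldist_le_of_near_near (hL : IsHypLength L D) {C E : Subgroup G}
    (hE : IsElementaryHull C E) (R S : ℕ) : ∃ K, ∀ r ∉ E, ∀ x x', Near L R C x → Near L R C x' →
      Near L S C (r⁻¹ * x) → Near L S C (r⁻¹ * x') → ldist L x x' ≤ K := by
  have hex : ∀ w : G, ∃ B, w ∉ E → ∀ x, Near L R C x → Near L S C (w⁻¹ * x) → L x ≤ B := by
    intro w
    by_cases hw : w ∈ E
    · exact ⟨0, fun h => (h hw).elim⟩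
    obtain ⟨B, hB⟩ := ((hL.finite_near_near (hE.finite_inf w hw) R (S + L w)).image L).bddAbove
    refine ⟨B, fun _ x hx hx' => hB ⟨x, ⟨hx, ?_⟩, rfl⟩⟩
    obtain ⟨c, hc, hxc⟩ := hx'
    refine ⟨w * c * w⁻¹, mem_conjSubgroup.2 (by simpa [mul_assoc] using hc), ?_⟩
    rw [← ldist_mul_left w, mul_inv_cancel_left] at hxc
    have h1 := hL.ldist_triangle x (w * c) (w * c * w⁻¹)
    have h2 : ldist L (w * c) (w * c * w⁻¹) = L w := by
      rw [ldist, inv_mul_cancel_left, hL.inv]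
    omega
  choose B hB using hex
  obtain ⟨K, hK⟩ := ((hL.finite_ball (R + S)).image B).bddAbove
  refine ⟨K + K, fun r hr x x' hx hx' hrx hrx' => ?_⟩
  obtain ⟨c, hc, hxc⟩ := hx
  obtain ⟨d, hd, hxd⟩ := hrx
  rw [← ldist_mul_left r, mul_inv_cancel_left] at hxd
  set w := c⁻¹ * r * d with hw
  have hwL : L w ≤ R + S := by
    have h1 := hL.ldist_triangle c x (r * d)
    have h2 := hL.ldist_comm c x
    have h3 : ldist L c (r * d) = L w := by rw [hw, mul_assoc]; rfl
    omega
  have hwE : w ∉ E := fun h => hr (by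
    rw [hw, mul_mem_cancel_right (hE.le hd), mul_mem_cancel_left (inv_mem (hE.le hc))] at h
    exact h)
  have hBw : B w ≤ K := hK ⟨w, hwL, rfl⟩
  have main : ∀ y, Near L R C y → Near L S C (r⁻¹ * y) → L (c⁻¹ * y) ≤ K := by
    intro y hy hry
    refine (hB w hwE _ ?_ ?_).trans hBw
    · obtain ⟨e, he, hye⟩ := hy
      exact ⟨c⁻¹ * e, mul_mem (inv_mem hc) he, by rwa [ldist_mul_left]⟩
    · obtain ⟨e, he, hye⟩ := hry
      refine ⟨d⁻¹ * e, mul_mem (inv_mem hd) he, ?_⟩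
      rw [show w⁻¹ * (c⁻¹ * y) = d⁻¹ * (r⁻¹ * y) by rw [hw]; group, ldist_mul_left]
      exact hye
  have h1 := main x ⟨c, hc, hxc⟩ ⟨d, hd, by
    rwa [← ldist_mul_left r, mul_inv_cancel_left]⟩
  have h2 := main x' hx' hrx'
  have h3 := hL.ldist_triangle (c⁻¹ * x) 1 (c⁻¹ * x')
  have h4 := hL.ldist_comm (c⁻¹ * x) 1
  rw [ldist_mul_left, ldist_one_left] at h3
  rw [ldist_one_left] at h4
  omega

theorem exists_near_of_btw (hL : IsHypLength L D) {P : Subgroup G} (hP : IsGeomQC L P) (r₀ : G) :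
    ∃ R, ∀ p ∈ P, ∀ x, Btw L 1 x (p * r₀) → Near L R P x := by
  obtain ⟨R, hR⟩ := hP
  refine ⟨4 * D + (R + L r₀), fun p hp x hx => ?_⟩
  obtain ⟨y, hy | hy | hy, hxy⟩ := hL.slim_quadrilateral hx p p
  · obtain ⟨q, hq, hyq⟩ := hR p hp y hy
    refine hL.near_of_near ⟨q, hq, ?_⟩ hxy
    omega
  · obtain rfl := hL.eq_of_btw_self hy
    exact hL.near_of_near ⟨y, hp, by rw [hL.ldist_self]; omega⟩ hxy
  · refine hL.near_of_near ⟨p, hp, ?_⟩ hxy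
    have h1 := ldist_le_of_btw hy
    have h2 : ldist L p (p * r₀) = L r₀ := by simp [ldist]
    rw [hL.ldist_comm]
    omega

theorem exists_le_of_notMem_elementaryHull (hL : IsHypLength L D) {C E P : Subgroup G}
    (hC : IsGeomQC L C) (hE : IsElementaryHull C E) (hP : IsGeomQC L P)
    (hPC : ((C ⊓ P : Subgroup G) : Set G).Finite) (r₀ : G) :
    ∃ K, ∀ p ∈ P, p * r₀ ∉ E → ∀ c ∈ C, ∀ c' ∈ C, L c ≤ L (c⁻¹ * (p * r₀) * c') + K := by
  obtain ⟨R', hR'⟩ := hL.exists_near_of_btw hP r₀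
  obtain ⟨R, hR⟩ := hC
  obtain ⟨K₁, hK₁⟩ := ((hL.finite_near_near hPC R (4 * D + R')).image L).bddAbove
  obtain ⟨K₂, hK₂⟩ := hL.exists_ldist_le_of_near_near hE R (4 * D + R)
  refine ⟨K₁ + K₂ + 2 + 4 * D, fun p hp hr c hc c' hc' => ?_⟩
  set r := p * r₀ with hrdef
  by_cases hlong : L c < K₁ + K₂ + 2
  · omega
  have trichotomy : ∀ x, Btw L 1 x c → L x ≤ K₁ ∨ Near L (4 * D + R) C (r⁻¹ * x) ∨
      L c ≤ L (c⁻¹ * r * c') + L x + 4 * D := by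
    intro x hx
    obtain ⟨y, hy | hy | hy, hxy⟩ := hL.slim_quadrilateral hx r (r * c')
    · exact Or.inl (hK₁ ⟨x, ⟨hR c hc x hx, hL.near_of_near (hR' p hp y hy) hxy⟩, rfl⟩)
    · refine Or.inr (Or.inl (hL.near_of_near (y := r⁻¹ * y) (hR c' hc' _ ?_) ?_))
      · rw [← btw_mul_left (g := r)]; simpa using hy
      · rwa [ldist_mul_left]
    · refine Or.inr (Or.inr ?_)
      have h1 := ldist_le_of_btw (hL.btw_symm hy)
      have h2 := hL.ldist_triangle x y c
      have h3 := hL.ldist_comm c y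
      have h4 : ldist L c (r * c') = L (c⁻¹ * r * c') := by rw [ldist, mul_assoc c⁻¹]
      have h5 := hx
      unfold Btw at h5
      rw [ldist_one_left, ldist_one_left] at h5
      omega
  obtain ⟨x₂, hx₂, hx₂t⟩ := hL.exists_btw 1 c (t := K₁ + K₂ + 2) (by
    rw [ldist_one_left]; omega)
  obtain ⟨x₁, hx₁, hx₁t⟩ := hL.exists_btw 1 x₂ (t := K₁ + 1) (by omega)
  have hx₁c := (hL.btw_trans_left hx₂ hx₁).1
  have hd : ldist L x₁ x₂ = K₂ + 1 := by unfold Btw at hx₁; omega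
  rw [ldist_one_left] at hx₁t hx₂t
  rcases trichotomy x₁ hx₁c with h | h | h
  · omega
  · rcases trichotomy x₂ hx₂ with h' | h' | h'
    · omega
    · have := hK₂ r hr x₁ x₂ (hR c hc _ hx₁c) (hR c hc _ hx₂) h h'
      omega
    · omega
  · omega

theorem exists_le_of_mem_elementaryHull {L : G → ℕ} {C E P : Subgroup G}
    (hE : IsElementaryHull C E) (hPC : ((C ⊓ P : Subgroup G) : Set G).Finite) (r₀ : G) :
    ∃ K, ∀ p ∈ P, p * r₀ ∈ E → L (p * r₀) ≤ K := by
  have hfin : ((E ⊓ P : Subgroup G) : Set G).Finite := by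
    obtain ⟨F, hF, -, hF'⟩ := exists_finite_of_relIndex_ne_zero (P := C ⊓ P) (Q := E ⊓ P) (by
      have h1 : C.relIndex (E ⊓ P) ≠ 0 := fun h =>
        hE.relIndex_ne_zero (Subgroup.relIndex_eq_zero_of_le_right inf_le_left h)
      rw [← Subgroup.inf_relIndex_right] at h1
      rwa [← inf_assoc, inf_eq_left.2 hE.le] at h1)
    refine (hPC.image2 (· * ·) hF).subset fun q hq => ?_
    obtain ⟨f, hf, p, hp, rfl⟩ := hF' q hq
    exact ⟨p, hp, f, hf, rfl⟩
  by_cases hex : ∃ p ∈ P, p * r₀ ∈ E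
  · obtain ⟨p₁, hp₁, hp₁E⟩ := hex
    obtain ⟨K, hK⟩ := (hfin.image fun q => L (q * (p₁ * r₀))).bddAbove
    refine ⟨K, fun p hp hpE => hK ⟨p * p₁⁻¹, ⟨?_, P.mul_mem hp (P.inv_mem hp₁)⟩, ?_⟩⟩
    · have := E.mul_mem hpE (E.inv_mem hp₁E)
      simpa [mul_assoc] using this
    · simp [mul_assoc]
  · exact ⟨0, fun p hp hpE => (hex ⟨p, hp, hpE⟩).elim⟩

end IsHypLength

/-- A list of elements alternately in `A i \ C` and `A (!i) \ C`, starting in `A i`. -/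
def IsReducedList (A : Bool → Subgroup G) (C : Subgroup G) : Bool → List G → Prop
  | _, [] => True
  | i, a :: l => a ∈ A i ∧ a ∉ C ∧ IsReducedList A C (!i) l

/-- The elementary consequences of an amalgam decomposition: generation by the factors and the
normal form theorem. -/
structure HasNormalForm (A : Bool → Subgroup G) (C : Subgroup G) : Prop where
  le : ∀ i, C ≤ A i
  exists_list : ∀ g : G, ∃ l : List G, (∀ x ∈ l, ∃ i, x ∈ A i) ∧ l.prod = g
  eq_nil : ∀ i l, IsReducedList A C i l → l.prod ∈ C → l = []

theorem hasNormalForm_of_isAmalgamatedFreeProduct {A : Bool → Subgroup G} {C : Subgroup G}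
    (amal : IsAmalgamatedFreeProduct (A true) (A false) C) : HasNormalForm A C := by
  have hle : ∀ i, C ≤ A i := by
    rintro (_ | _)
    exacts [amal.le_right, amal.le_left]
  refine ⟨hle, ?_, ?_⟩
  · intro g
    have hg : g ∈ Subgroup.closure ((A true : Set G) ∪ A false) := by
      rw [Subgroup.closure_union, Subgroup.closure_eq, Subgroup.closure_eq, amal.sup_eq_top]
      exact Subgroup.mem_top g
    rw [← Subgroup.mem_toSubmonoid, Subgroup.closure_toSubmonoid] at hg
    obtain ⟨l, hl, hlg⟩ := Submonoid.exists_list_of_mem_closure hg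
    refine ⟨l, fun x hx => ?_, hlg⟩
    rcases hl x hx with (h | h) | (h | h)
    exacts [⟨true, h⟩, ⟨false, h⟩, ⟨true, inv_mem_iff.1 h⟩, ⟨false, inv_mem_iff.1 h⟩]
  · let φ : ∀ i, C →* A i := fun i => Subgroup.inclusion (hle i)
    have hφ : ∀ i, Function.Injective (φ i) := fun i => Subgroup.inclusion_injective (hle i)
    obtain ⟨f, hft, hff⟩ := amal.univ (Monoid.PushoutI φ) (Monoid.PushoutI.of (φ := φ) true)
      (Monoid.PushoutI.of (φ := φ) false) (fun c hA hB => by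
        have hc : c ∈ C := amal.inf_eq ▸ ⟨hA, hB⟩
        exact (Monoid.PushoutI.of_apply_eq_base φ true ⟨c, hc⟩).trans
          (Monoid.PushoutI.of_apply_eq_base φ false ⟨c, hc⟩).symm)
    have hf : ∀ i (a : A i), f a = Monoid.PushoutI.of (φ := φ) i a := by
      rintro (_ | _) a
      exacts [hff a, hft a]
    have key : ∀ (l : List G) (i : Bool), IsReducedList A C i l →
        ∃ w : Monoid.CoprodI.Word fun i => A i, Monoid.PushoutI.Reduced φ w ∧
          w.fstIdx ≠ some (!i) ∧ w.toList.length = l.length ∧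
          Monoid.PushoutI.ofCoprodI w.prod = f l.prod := by
      intro l
      induction l with
      | nil =>
        intro i _
        refine ⟨.empty, fun g hg => by simp [Monoid.CoprodI.Word.empty] at hg, ?_, rfl, ?_⟩
        · simp [Monoid.CoprodI.Word.fstIdx, Monoid.CoprodI.Word.empty]
        · simp
      | cons a l ih =>
        rintro i ⟨ha, haC, hl⟩
        obtain ⟨w, hw, hwi, hwl, hwp⟩ := ih (!i) hl
        rw [Bool.not_not] at hwi
        have ha1 : (⟨a, ha⟩ : A i) ≠ 1 := fun h => haC (by
          rw [show a = 1 from congrArg Subtype.val h]; exact one_mem C)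
        refine ⟨.cons ⟨a, ha⟩ w hwi ha1, ?_, by simp, ?_, ?_⟩
        · intro g hg
          rcases List.mem_cons.1 hg with rfl | hg
          · rintro ⟨c, hc⟩
            exact haC (by rw [← show (c : G) = a from congrArg Subtype.val hc]; exact c.2)
          · exact hw g hg
        · simp [Monoid.CoprodI.Word.cons, hwl]
        · rw [Monoid.CoprodI.Word.prod_cons, map_mul, hwp, List.prod_cons, map_mul,
            Monoid.PushoutI.ofCoprodI_of, ← hf i ⟨a, ha⟩]
    intro i l hl hlC
    obtain ⟨w, hw, -, hwl, hwp⟩ := key l i hl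
    have := hw.eq_empty_of_mem_range hφ (by
      rw [hwp]
      refine ⟨⟨l.prod, hlC⟩, ?_⟩
      rw [← Monoid.PushoutI.of_apply_eq_base φ true]
      exact (hf true ⟨l.prod, hle true hlC⟩).symm)
    rw [this] at hwl
    exact List.eq_nil_of_length_eq_zero hwl.symm

namespace HasNormalForm

variable {A : Bool → Subgroup G} {C : Subgroup G}

theorem mem_or (i : Bool) {j : Bool} {x : G} (hx : x ∈ A j) : x ∈ A i ∨ x ∈ A (!i) := by
  cases i <;> cases j <;> simp [hx]

theorem exists_mul_mem (hA : HasNormalForm A C) : ∀ (l : List G) (i : Bool) {j : Bool} {x : G},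
    IsReducedList A C i l → l ≠ [] → x ∈ A j →
    ∃ l', IsReducedList A C i l' ∧ l'.prod⁻¹ * (l.prod * x) ∈ C
  | [], _, _, _, _, h, _ => (h rfl).elim
  | [a], i, j, x, hl, _, hx => by
    rcases mem_or (A := A) i hx with hx | hx
    · by_cases h : a * x ∈ C
      · exact ⟨[], trivial, by simpa using h⟩
      · exact ⟨[a * x], ⟨mul_mem hl.1 hx, h, trivial⟩, by simp⟩
    · by_cases h : x ∈ C
      · exact ⟨[a], hl, by simpa using h⟩
      · exact ⟨[a, x], ⟨hl.1, hl.2.1, hx, h, trivial⟩, by simp⟩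
  | a :: b :: l, i, j, x, hl, _, hx => by
    obtain ⟨l', hl', h⟩ := hA.exists_mul_mem (b :: l) (!i) hl.2.2 (by simp) hx
    refine ⟨a :: l', ⟨hl.1, hl.2.1, hl'⟩, ?_⟩
    simpa [mul_assoc] using h

theorem exists_isReducedList (hA : HasNormalForm A C) (g : G) :
    ∃ i l, IsReducedList A C i l ∧ l.prod⁻¹ * g ∈ C := by
  obtain ⟨W, hW, rfl⟩ := hA.exists_list g
  induction W using List.reverseRecOn with
  | nil => exact ⟨true, [], trivial, by simp⟩
  | append_singleton W x ih =>
    obtain ⟨i, l, hl, h⟩ := ih fun x hx => hW x (by simp [hx])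
    obtain ⟨j, hx⟩ := hW x (by simp)
    by_cases hnil : l = []
    · subst hnil
      have h' : W.prod * x ∈ A j := mul_mem (hA.le j (by simpa using h)) hx
      by_cases hc : W.prod * x ∈ C
      · exact ⟨true, [], trivial, by simpa using hc⟩
      · exact ⟨j, [W.prod * x], ⟨h', hc, trivial⟩, by simp⟩
    · obtain ⟨l', hl', h'⟩ := hA.exists_mul_mem l i hl hnil
        (mul_mem (hA.le j h) hx)
      exact ⟨i, l', hl', by simpa [mul_assoc] using h'⟩

/-- A word in the factors whose value lies beyond the edge `a C` has a prefix with value in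
`a C`. -/
theorem exists_prefix_mem (hA : HasNormalForm A C) {i : Bool} {a : G} (W : List G)
    (hW : ∀ x ∈ W, ∃ i, x ∈ A i) : ∀ l, IsReducedList A C i (a :: l) →
    (a :: l).prod⁻¹ * W.prod ∈ C → ∃ n, a⁻¹ * (W.take n).prod ∈ C := by
  induction W using List.reverseRecOn with
  | nil =>
    intro l hl h
    have := hA.eq_nil i (a :: l) hl (by
      rw [List.prod_nil, mul_one] at h; exact inv_mem_iff.1 h)
    simp at this
  | append_singleton W x ih =>
    intro l hl h
    by_cases hnil : l = []
    · subst hnil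
      exact ⟨(W ++ [x]).length, by rw [List.take_length]; simpa using h⟩
    · obtain ⟨j, hx⟩ := hW x (by simp)
      obtain ⟨l', hl', h'⟩ := hA.exists_mul_mem l (!i) hl.2.2 hnil
        (mul_mem (hA.le j h) (inv_mem hx))
      obtain ⟨n, hn⟩ := ih (fun x hx => hW x (by simp [hx])) l' ⟨hl.1, hl.2.1, hl'⟩ (by
        simpa [mul_assoc] using h')
      refine ⟨min n W.length, ?_⟩
      rw [List.take_append_of_le_length (min_le_right _ _)]
      rcases le_total n W.length with h | h
      · rwa [min_eq_left h]
      · rw [min_eq_right h, List.take_length]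
        rwa [List.take_of_length_le h] at hn

end HasNormalForm

namespace HasNormalForm

variable {A : Bool → Subgroup G} {C : Subgroup G}

theorem isReducedList_take : ∀ (l : List G) (i : Bool) (n : ℕ), IsReducedList A C i l →
    IsReducedList A C i (l.take n)
  | [], _, _, _ => by simp [IsReducedList]
  | _ :: _, _, 0, _ => by simp [IsReducedList]
  | _ :: l, i, n + 1, h => ⟨h.1, h.2.1, isReducedList_take l (!i) n h.2.2⟩

theorem prod_take_inv_mul_notMem (hA : HasNormalForm A C) : ∀ (l : List G) (i : Bool) (m n : ℕ),
    IsReducedList A C i l → m < n → n ≤ l.length → (l.take m).prod⁻¹ * (l.take n).prod ∉ C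
  | [], _, m, n, _, hmn, hn => by simp at hn; omega
  | a :: l, i, 0, n, hl, hmn, hn => fun h => by
    have := hA.eq_nil i _ (isReducedList_take _ i n hl) (by simpa using h)
    simp at this; omega
  | a :: l, i, m + 1, 0, hl, hmn, hn => by omega
  | a :: l, i, m + 1, n + 1, hl, hmn, hn => by
    have := hA.prod_take_inv_mul_notMem l (!i) m n hl.2.2 (by omega) (by simpa using hn)
    simpa [mul_assoc] using this

theorem exists_prod_take_inv_mul_mem : ∀ (l : List G) (i : Bool) (n : ℕ),
    IsReducedList A C i l → n < l.length → ∃ e, (l.take n).prod⁻¹ * (l.take (n + 1)).prod ∈ A e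
  | [], _, n, _, hn => by simp at hn
  | a :: l, i, 0, hl, hn => ⟨i, by simpa using hl.1⟩
  | a :: l, i, n + 1, hl, hn => by
    obtain ⟨e, he⟩ := exists_prod_take_inv_mul_mem l (!i) n hl.2.2 (by simpa using hn)
    exact ⟨e, by simpa [mul_assoc] using he⟩

/-- A word in the factors can be cut along the edges of the normal form of its value. -/
theorem exists_cut (hA : HasNormalForm A C) {X : Set G} (hX : ∀ x ∈ X, ∃ i, x ∈ A i) :
    ∀ (l : List G) (i : Bool), IsReducedList A C i l → l ≠ [] → ∀ W : List G, (∀ x ∈ W, x ∈ X) →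
    l.prod⁻¹ * W.prod ∈ C → ∃ p : ℕ → G, p 0 = 1 ∧ p l.length = W.prod ∧
      (∀ j ≤ l.length, (l.take j).prod⁻¹ * p j ∈ C) ∧ (∀ j, ∃ n, p j = (W.take n).prod) ∧
      ∑ j ∈ Finset.range l.length, wordLength X ((p j)⁻¹ * p (j + 1)) ≤ W.length
  | [], _, _, h, _, _, _ => (h rfl).elim
  | [a], i, hl, _, W, hW, h => by
    refine ⟨fun j => if j = 0 then 1 else W.prod, by simp, by simp, ?_, ?_, ?_⟩
    · intro j hj
      have hj' : j = 0 ∨ j = 1 := by simp at hj; omega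
      rcases hj' with rfl | rfl
      · simp
      · simpa using h
    · intro j
      by_cases hj : j = 0
      · exact ⟨0, by simp [hj]⟩
      · exact ⟨W.length, by simp [hj]⟩
    · simpa using wordLength_prod_le hW
  | a :: b :: l, i, hl, _, W, hW, h => by
    obtain ⟨n, hn⟩ := hA.exists_prefix_mem W (fun x hx => hX x (hW x hx)) (b :: l) hl h
    set c := a⁻¹ * (W.take n).prod with hc
    have hac : (W.take n).prod = a * c := by rw [hc]; group
    have hW' : W.prod = a * c * (W.drop n).prod := by
      rw [← List.prod_take_mul_prod_drop W n, hac]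
    have hl' : IsReducedList A C (!i) ((c⁻¹ * b) :: l) := by
      refine ⟨mul_mem (inv_mem (hA.le _ hn)) hl.2.2.1, fun hcb => hl.2.2.2.1 ?_, hl.2.2.2.2⟩
      exact (mul_mem_cancel_left (inv_mem hn)).1 hcb
    obtain ⟨p, hp0, hpk, hpC, hpn, hps⟩ := hA.exists_cut hX ((c⁻¹ * b) :: l) (!i) hl' (by simp)
      (W.drop n) (fun x hx => hW x (List.mem_of_mem_drop hx)) (by
        rw [hW'] at h; simpa [mul_assoc] using h)
    refine ⟨fun j => Nat.casesOn j 1 fun j => a * c * p j, rfl, ?_, ?_, ?_, ?_⟩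
    · rw [hW', ← hpk]; rfl
    · rintro (_ | _ | j) hj
      · simp
      · simpa [hp0] using hn
      · have := hpC (j + 1) (by simpa using hj)
        simpa [mul_assoc] using this
    · rintro (_ | j)
      · exact ⟨0, by simp⟩
      · obtain ⟨m, hm⟩ := hpn j
        refine ⟨n + m, ?_⟩
        change a * c * p j = _
        rw [List.take_add, List.prod_append, hac, hm]
    · rw [List.length_cons, Finset.sum_range_succ']
      have h1 : wordLength X (W.take n).prod ≤ (W.take n).length :=
        wordLength_prod_le fun x hx => hW x (List.mem_of_mem_take hx)
      have h2 : ∀ j, (a * c * p j)⁻¹ * (a * c * p (j + 1)) = (p j)⁻¹ * p (j + 1) := fun j => by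
        group
      have h3 : (1 : G)⁻¹ * (a * c * p 0) = (W.take n).prod := by rw [hp0, hac]; group
      change ∑ j ∈ Finset.range (b :: l).length, wordLength X ((a * c * p j)⁻¹ * (a * c * p (j + 1)))
        + wordLength X ((1 : G)⁻¹ * (a * c * p 0)) ≤ _
      simp only [h2, h3]
      have h4 : W.length = (W.take n).length + (W.drop n).length := by
        rw [← List.length_append, List.take_append_drop]
      rw [h4, add_comm]
      exact add_le_add h1 (by simpa using hps)

theorem exists_isFinSymm (hA : HasNormalForm A C) {X : Set G} (hX : X.Finite)
    (hXt : Subgroup.closure X = ⊤) : ∃ Y : Set G, IsFinSymm Y ∧ Subgroup.closure Y = ⊤ ∧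
      ∀ y ∈ Y, ∃ i, y ∈ A i := by
  choose w hw hw' using hA.exists_list
  have hF : (⋃ x ∈ X, {y | y ∈ w x}).Finite := hX.biUnion fun x _ => (w x).finite_toSet
  refine ⟨_, isFinSymm_union_inv hF, ?_, ?_⟩
  · rw [closure_union_inv, eq_top_iff, ← hXt, Subgroup.closure_le]
    intro x hx
    rw [← hw' x]
    exact Subgroup.list_prod_mem _ fun y hy => Subgroup.subset_closure (Set.mem_biUnion hx hy)
  · have h1 : ∀ y ∈ ⋃ x ∈ X, {y | y ∈ w x}, ∃ i, y ∈ A i := by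
      intro y hy
      obtain ⟨x, -, hy⟩ := Set.mem_iUnion₂.1 hy
      exact hw x y hy
    rintro y (hy | hy)
    · exact h1 y hy
    · obtain ⟨i, hi⟩ := h1 _ hy
      exact ⟨i, inv_mem_iff.1 hi⟩

/-- If the amalgamated subgroup is undistorted then so are the factors. -/
theorem isUndistorted_factor (hA : HasNormalForm A C) {L : G → ℕ} {D : ℕ} (hL : IsHypLength L D)
    {X : Set G} (hX : IsFinSymm X) (hXt : Subgroup.closure X = ⊤) (hXA : ∀ x ∈ X, ∃ i, x ∈ A i)
    {K₀ : ℕ} (hXL : ∀ g, wordLength X g ≤ K₀ * L g) (hC : IsUndistorted L C) (i : Bool) :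
    IsUndistorted L (A i) := by
  obtain ⟨Y, hY, hYC, K, hK⟩ := hC
  obtain ⟨M, hM, -⟩ := hL.exists_le_mul_wordLength hX
  have hXi : IsFinSymm (X ∩ A i) := ⟨hX.finite.subset Set.inter_subset_left,
    fun x hx => ⟨hX.inv_mem x hx.1, inv_mem hx.2⟩⟩
  have hZ := hXi.union hY
  set Z := X ∩ A i ∪ Y with hZdef
  have hCZ : C ≤ Subgroup.closure Z := hYC ▸ Subgroup.closure_mono Set.subset_union_right
  have hCle : ∀ W : List G, (∀ x ∈ W, x ∈ X) → W.prod ∈ C → W ≠ [] →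
      wordLength Z W.prod ≤ (K * M + K + 1) * W.length := by
    intro W hW hWC hne
    have h1 := wordLength_anti hY (Z := Z) Set.subset_union_right (hYC.symm ▸ hWC)
    have h2 := hK _ hWC
    have h3 := hL.list_prod_le fun x hx => hM x (hW x hx)
    have h4 : 1 ≤ W.length := List.length_pos_iff.2 hne
    have h5 : K * L W.prod ≤ K * (M * W.length) := Nat.mul_le_mul_left _ h3
    nlinarith
  have key : ∀ (n : ℕ) (W : List G), W.length ≤ n → (∀ x ∈ W, x ∈ X) → W.prod ∈ A i →
      W.prod ∈ Subgroup.closure Z ∧ wordLength Z W.prod ≤ (K * M + K + 1) * W.length := by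
    intro n
    induction n with
    | zero =>
      intro W hn _ _
      obtain rfl := List.eq_nil_of_length_eq_zero (Nat.le_zero.1 hn)
      simp [wordLength_one]
    | succ n ih =>
      rintro (_ | ⟨x, W⟩) hn hW hWA
      · simp [wordLength_one]
      have combine : ∀ U V : List G, x :: W = U ++ V → U ≠ [] → U.prod ∈ A i →
          U.prod ∈ Subgroup.closure Z → wordLength Z U.prod ≤ (K * M + K + 1) * U.length →
          (x :: W).prod ∈ Subgroup.closure Z ∧
            wordLength Z (x :: W).prod ≤ (K * M + K + 1) * (x :: W).length := by
        intro U V hUV hU hUA hUZ hUl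
        have hlen : U.length + V.length ≤ n + 1 := by
          rw [← List.length_append, ← hUV]; exact hn
        have hUpos : 1 ≤ U.length := List.length_pos_iff.2 hU
        rw [hUV, List.prod_append] at hWA
        obtain ⟨h1, h2⟩ := ih V (by omega) (fun y hy => hW y (by rw [hUV]; simp [hy]))
          ((mul_mem_cancel_left hUA).1 hWA)
        rw [hUV, List.prod_append, List.length_append, Nat.mul_add]
        exact ⟨mul_mem hUZ h1, (wordLength_mul_le hZ hUZ h1).trans (add_le_add hUl h2)⟩
      by_cases hx : x ∈ A i
      · have hxZ : x ∈ Z := Or.inl ⟨hW x (by simp), hx⟩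
        refine combine [x] W rfl (by simp) (by simpa using hx)
          (by simpa using Subgroup.subset_closure hxZ) ?_
        have := wordLength_le_one hxZ
        simp; omega
      by_cases hWC : (x :: W).prod ∈ C
      · exact ⟨hCZ hWC, hCle _ hW hWC (by simp)⟩
      have hx' : x ∈ A (!i) := by
        obtain ⟨j, hj⟩ := hXA x (hW x (by simp))
        exact (mem_or i hj).resolve_left hx
      obtain ⟨m, hm⟩ := hA.exists_prefix_mem (i := !i) (a := x⁻¹) W
        (fun y hy => hXA y (hW y (by simp [hy]))) [(x :: W).prod]
        ⟨inv_mem hx', fun h => hx (hA.le i (inv_mem_iff.1 h)), by simpa using hWA, hWC, trivial⟩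
        (by simp)
      have hU : (x :: W.take m).prod ∈ C := by simpa using hm
      exact combine (x :: W.take m) (W.drop m) (by simp) (by simp) (hA.le i hU) (hCZ hU)
        (hCle _ (fun y hy => hW y (by
          rcases List.mem_cons.1 hy with rfl | hy
          · simp
          · simp [List.mem_of_mem_take hy])) hU (by simp))
  have geo : ∀ a ∈ A i, a ∈ Subgroup.closure Z ∧
      wordLength Z a ≤ (K * M + K + 1) * wordLength X a := by
    intro a ha
    obtain ⟨W, hWl, hWX, rfl⟩ := exists_geodesic_word hX (hXt ▸ Subgroup.mem_top a)
    rw [← hWl]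
    exact key _ W le_rfl hWX ha
  refine ⟨Z, hZ, le_antisymm ((Subgroup.closure_le _).2 ?_) fun a ha => (geo a ha).1,
    (K * M + K + 1) * K₀, fun a ha => ?_⟩
  · rintro z (hz | hz)
    · exact hz.2
    · exact hA.le i (hYC ▸ Subgroup.subset_closure hz)
  · have h1 := (geo a ha).2
    have h2 := Nat.mul_le_mul_left (K * M + K + 1) (hXL a)
    rw [← mul_assoc] at h2
    omega

end HasNormalForm

theorem exists_forall_of_finite {ι : Type*} {S : Set ι} (hS : S.Finite) {p : ι → ℕ → Prop}
    (mono : ∀ i m n, m ≤ n → p i m → p i n) (h : ∀ i ∈ S, ∃ n, p i n) : ∃ n, ∀ i ∈ S, p i n := by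
  choose! f hf using h
  obtain ⟨n, hn⟩ := (hS.image f).bddAbove
  exact ⟨n, fun i hi => mono i _ _ (hn ⟨i, hi, rfl⟩) (hf i hi)⟩

theorem sum_range_le_of_chain {d w : ℕ → ℕ} {e : ℕ → Prop} {k N : ℕ} (hk : d k = 0)
    (hd : ∀ j < k, d j ≤ w j ∨ e j ∧ d j ≤ w j + d (j + 1))
    (he : ∀ j, j + N ≤ k → ∃ m < N, ¬ e (j + m)) :
    ∑ j ∈ Finset.range k, d j ≤ N * ∑ j ∈ Finset.range k, w j := by
  let w' : ℕ → ℕ := fun j => if j < k then w j else 0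
  have hw' : ∀ j < k, w' j = w j := fun j hj => by simp [w', hj]
  have key : ∀ n j, j ≤ k → d j ≤ ∑ t ∈ Finset.range n, w' (j + t) ∨
      ∀ m < n, j + m < k ∧ e (j + m) := by
    intro n
    induction n with
    | zero => intro j _; right; intro m hm; omega
    | succ n ih =>
      intro j hj
      rcases hj.eq_or_lt with rfl | hj
      · left; omega
      rw [Finset.sum_range_succ']
      have hs : ∀ t, w' (j + (t + 1)) = w' (j + 1 + t) := fun t => by congr 1; omega
      simp only [hs, add_zero, hw' j hj]
      rcases hd j hj with h | ⟨h1, h2⟩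
      · left; omega
      · rcases ih (j + 1) hj with h | h
        · left; omega
        · right
          rintro (_ | m) hm
          · exact ⟨hj, h1⟩
          · have := h m (by omega)
            rwa [add_assoc, add_comm 1 m] at this
  have hle : ∀ j < k, d j ≤ ∑ t ∈ Finset.range N, w' (j + t) := by
    intro j hj
    refine (key N j hj.le).resolve_right fun h => ?_
    have hjN : j + N ≤ k := by
      rcases Nat.eq_zero_or_pos N with rfl | hN
      · omega
      · have := (h (N - 1) (by omega)).1; omega
    obtain ⟨m, hm, hme⟩ := he j hjN
    exact hme (h m hm).2
  have hshift : ∀ t, ∑ j ∈ Finset.range k, w' (j + t) ≤ ∑ j ∈ Finset.range k, w j := by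
    intro t
    have h1 := Finset.sum_range_add w' t k
    have h2 := Finset.sum_range_add w' k t
    rw [add_comm t k, h2] at h1
    have h3 : ∑ x ∈ Finset.range t, w' (k + x) = 0 := Finset.sum_eq_zero fun x _ => by simp [w']
    have h4 : ∑ j ∈ Finset.range k, w' j = ∑ j ∈ Finset.range k, w j :=
      Finset.sum_congr rfl fun j hj => hw' j (Finset.mem_range.1 hj)
    simp only [add_comm _ t]
    omega
  calc ∑ j ∈ Finset.range k, d j
      ≤ ∑ j ∈ Finset.range k, ∑ t ∈ Finset.range N, w' (j + t) :=
        Finset.sum_le_sum fun j hj => hle j (Finset.mem_range.1 hj)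
    _ = ∑ t ∈ Finset.range N, ∑ j ∈ Finset.range k, w' (j + t) := Finset.sum_comm
    _ ≤ ∑ t ∈ Finset.range N, ∑ j ∈ Finset.range k, w j := Finset.sum_le_sum fun t _ => hshift t
    _ = N * ∑ j ∈ Finset.range k, w j := by simp

theorem wordLength_le_sum {Y : Set G} (hY : IsFinSymm Y) (h : ℕ → G) (k : ℕ)
    (hmem : ∀ j ≤ k, h j ∈ Subgroup.closure Y) :
    wordLength Y ((h 0)⁻¹ * h k) ≤ ∑ j ∈ Finset.range k, wordLength Y ((h j)⁻¹ * h (j + 1)) := by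
  induction k with
  | zero => simp [wordLength_one]
  | succ k ih =>
    rw [Finset.sum_range_succ]
    have h1 := ih fun j hj => hmem j (by omega)
    have h2 := wordLength_mul_le hY
      (mul_mem (inv_mem (hmem 0 (by omega))) (hmem k (by omega)))
      (mul_mem (inv_mem (hmem k (by omega))) (hmem (k + 1) le_rfl))
    rw [show (h 0)⁻¹ * h k * ((h k)⁻¹ * h (k + 1)) = (h 0)⁻¹ * h (k + 1) by group] at h2
    omega

/-- A chain which makes too many consecutive steps inside `E` visits some left coset of `C`
twice. -/
theorem exists_window {C E : Subgroup G} (h : C.relIndex E ≠ 0) : ∃ N : ℕ, ∀ (p : ℕ → G) (k : ℕ),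
    (∀ i j, i < j → j ≤ k → (p i)⁻¹ * p j ∉ C) →
    ∀ j, j + N ≤ k → ∃ m < N, (p (j + m))⁻¹ * p (j + m + 1) ∉ E := by
  obtain ⟨F, hF, -, hFE⟩ := exists_finite_of_relIndex_ne_zero h
  refine ⟨hF.toFinset.card, fun p k hp j hj => ?_⟩
  by_contra! hcon
  have hE : ∀ m ≤ hF.toFinset.card, (p (j + m))⁻¹ * p j ∈ E := by
    intro m
    induction m with
    | zero => intro _; simp
    | succ m ih =>
      intro hm
      have h1 := mul_mem (inv_mem (hcon m (by omega))) (ih (by omega))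
      rw [show ((p (j + m))⁻¹ * p (j + m + 1))⁻¹ * ((p (j + m))⁻¹ * p j) =
        (p (j + m + 1))⁻¹ * p j by group] at h1
      exact h1
  choose! f hf c hc hfc using hFE
  obtain ⟨m, hm, n, hn, hmn, hfmn⟩ := Finset.exists_ne_map_eq_of_card_lt_of_maps_to
    (s := Finset.range (hF.toFinset.card + 1)) (t := hF.toFinset)
    (f := fun m => f ((p (j + m))⁻¹ * p j)) (by simp) (fun m hm => by
      simp only [Set.Finite.coe_toFinset]
      exact hf _ (hE m (by simp at hm; omega)))
  simp only [Finset.mem_range] at hm hn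
  have same : ∀ m n, m < hF.toFinset.card + 1 → n < hF.toFinset.card + 1 → m < n →
      f ((p (j + m))⁻¹ * p j) ≠ f ((p (j + n))⁻¹ * p j) := by
    intro m n hm hn hmn heq
    refine hp (j + m) (j + n) (by omega) (by omega) ?_
    have h1 := hfc _ (hE m (by omega))
    have h2 := hfc _ (hE n (by omega))
    rw [← heq] at h2
    rw [show (p (j + m))⁻¹ * p (j + n) = ((p (j + m))⁻¹ * p j) * ((p (j + n))⁻¹ * p j)⁻¹ by group]
    nth_rewrite 1 [h1]
    nth_rewrite 1 [h2]
    rw [mul_inv_rev, mul_assoc, mul_inv_cancel_left]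
    exact mul_mem (hc _ (hE m (by omega))) (inv_mem (hc _ (hE n (by omega))))
  rcases lt_or_gt_of_ne hmn with hlt | hlt
  · exact same m n hm hn hlt hfmn
  · exact same n m hn hm hlt hfmn.symm

theorem exists_wordLength_le_of_isUndistorted {L : G → ℕ} {Y : Set G}
    (hY : IsFinSymm Y) {P : Subgroup G} (hPY : P ≤ Subgroup.closure Y) (hP : IsUndistorted L P) :
    ∃ K, ∀ p ∈ P, wordLength Y p ≤ K * L p + K := by
  obtain ⟨Z, hZ, rfl, K, hK⟩ := hP
  obtain ⟨K', hK'⟩ := exists_wordLength_le_mul hZ hY fun z hz => hPY (Subgroup.subset_closure hz)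
  refine ⟨K' * K, fun p hp => (hK' p hp).trans ?_⟩
  calc K' * wordLength Z p ≤ K' * (K * L p + K) := Nat.mul_le_mul_left _ (hK p hp)
    _ = _ := by ring

namespace IsHypLength

variable {L : G → ℕ} {D : ℕ}

theorem exists_step_wordLength_le (hL : IsHypLength L D) {H B C : Subgroup G} {Y : Set G}
    (hY : IsFinSymm Y) (hYH : Subgroup.closure Y = H) (hCB : C ≤ B) (s s' : G)
    (hP : IsUndistorted L (H ⊓ conjSubgroup s B)) :
    ∃ K, ∀ h ∈ H, ∀ c ∈ C, ∀ c' ∈ C, ∀ u ∈ B, h * s' * c' = s * c * u →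
      wordLength Y h ≤ K * (L c + L u + L c' + 1) := by
  by_cases hex : ∃ h₀ ∈ H, s⁻¹ * h₀ * s' ∈ B
  swap
  · refine ⟨0, fun h hh c hc c' hc' u hu heq => (hex ⟨h, hh, ?_⟩).elim⟩
    rw [show s⁻¹ * h * s' = c * u * c'⁻¹ by
      rw [eq_mul_inv_iff_mul_eq, mul_assoc, mul_assoc, ← mul_assoc h, heq]; group]
    exact mul_mem (mul_mem (hCB hc) hu) (inv_mem (hCB hc'))
  obtain ⟨h₀, hh₀, hh₀B⟩ := hex
  obtain ⟨K, hK⟩ := exists_wordLength_le_of_isUndistorted hY (hYH ▸ inf_le_left) hP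
  set M := L s + L s' + L h₀
  refine ⟨K * (M + 1) + K + wordLength Y h₀, fun h hh c hc c' hc' u hu heq => ?_⟩
  have hr : s⁻¹ * h * s' = c * u * c'⁻¹ := by
    rw [eq_mul_inv_iff_mul_eq, mul_assoc, mul_assoc, ← mul_assoc h, heq]; group
  have hmem : h * h₀⁻¹ ∈ H ⊓ conjSubgroup s B := by
    refine ⟨H.mul_mem hh (H.inv_mem hh₀), mem_conjSubgroup.2 ?_⟩
    rw [show s⁻¹ * (h * h₀⁻¹) * s = (s⁻¹ * h * s') * (s⁻¹ * h₀ * s')⁻¹ by group, hr]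
    exact mul_mem (mul_mem (mul_mem (hCB hc) hu) (inv_mem (hCB hc'))) (inv_mem hh₀B)
  have h1 := hK _ hmem
  have h2 := wordLength_mul_le hY (g := h * h₀⁻¹) (h := h₀) (hYH ▸ hmem.1) (hYH ▸ hh₀)
  rw [inv_mul_cancel_right] at h2
  have h3 : L (h * h₀⁻¹) ≤ M + (L c + L u + L c') := by
    have e : h = s * (c * u * c'⁻¹) * s'⁻¹ := by rw [← hr]; group
    have i1 := hL.mul_le h h₀⁻¹
    have i2 := hL.mul_le (s * (c * u * c'⁻¹)) s'⁻¹
    have i3 := hL.mul_le s (c * u * c'⁻¹)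
    have i4 := hL.mul_le (c * u) c'⁻¹
    have i5 := hL.mul_le c u
    rw [← e] at i2
    rw [hL.inv] at i1 i2 i4
    omega
  have h4 := Nat.mul_le_mul_left K h3
  set q := L c + L u + L c'
  nlinarith [Nat.zero_le (K * M * q), Nat.zero_le (wordLength Y h₀ * q), Nat.zero_le (K * q)]

theorem exists_step_le (hL : IsHypLength L D) {H B C E : Subgroup G} (hCB : C ≤ B)
    (hC : IsGeomQC L C) (hE : IsElementaryHull C E) (s s' : G)
    (hP : IsUndistorted L (H ⊓ conjSubgroup s B))
    (hfin : ((C ⊓ conjSubgroup s⁻¹ H : Subgroup G) : Set G).Finite) :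
    ∃ K, ∀ h ∈ H, ∀ c ∈ C, ∀ c' ∈ C, ∀ u ∈ B, h * s' * c' = s * c * u →
      L c ≤ L u + K ∨ u ∈ E ∧ L c ≤ L u + K + L c' := by
  have hr : ∀ h c c' u : G, h * s' * c' = s * c * u → s⁻¹ * h * s' = c * u * c'⁻¹ := by
    intro h c c' u heq
    rw [eq_mul_inv_iff_mul_eq, mul_assoc, mul_assoc, ← mul_assoc h, heq]; group
  by_cases hex : ∃ h₀ ∈ H, s⁻¹ * h₀ * s' ∈ B
  swap
  · refine ⟨0, fun h hh c hc c' hc' u hu heq => (hex ⟨h, hh, ?_⟩).elim⟩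
    rw [hr h c c' u heq]
    exact mul_mem (mul_mem (hCB hc) hu) (inv_mem (hCB hc'))
  obtain ⟨h₀, hh₀, hh₀B⟩ := hex
  set P := conjSubgroup s⁻¹ (H ⊓ conjSubgroup s B) with hPdef
  have hPqc : IsGeomQC L P := hL.isGeomQC_of_isUndistorted (hL.isUndistorted_conjSubgroup hP s⁻¹)
  have hCP : ((C ⊓ P : Subgroup G) : Set G).Finite :=
    hfin.subset fun x hx => ⟨hx.1, mem_conjSubgroup.2 (mem_conjSubgroup.1 hx.2).1⟩
  obtain ⟨K₁, hK₁⟩ := hL.exists_le_of_notMem_elementaryHull hC hE hPqc hCP (s⁻¹ * h₀ * s')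
  obtain ⟨K₂, hK₂⟩ := exists_le_of_mem_elementaryHull (L := L) hE hCP (s⁻¹ * h₀ * s')
  refine ⟨K₁ + K₂, fun h hh c hc c' hc' u hu heq => ?_⟩
  have hr' := hr h c c' u heq
  have hp : s⁻¹ * h * h₀⁻¹ * s ∈ P := by
    refine mem_conjSubgroup.2 ⟨?_, mem_conjSubgroup.2 ?_⟩
    · rw [show s⁻¹⁻¹ * (s⁻¹ * h * h₀⁻¹ * s) * s⁻¹ = h * h₀⁻¹ by group]
      exact H.mul_mem hh (H.inv_mem hh₀)
    · rw [show s⁻¹ * (s⁻¹⁻¹ * (s⁻¹ * h * h₀⁻¹ * s) * s⁻¹) * s =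
        (s⁻¹ * h * s') * (s⁻¹ * h₀ * s')⁻¹ by group, hr']
      exact mul_mem (mul_mem (mul_mem (hCB hc) hu) (inv_mem (hCB hc'))) (inv_mem hh₀B)
  have hpr : s⁻¹ * h * h₀⁻¹ * s * (s⁻¹ * h₀ * s') = c * u * c'⁻¹ := by rw [← hr']; group
  have huE : c * u * c'⁻¹ ∈ E ↔ u ∈ E := by
    rw [mul_mem_cancel_right (inv_mem (hE.le hc')), mul_mem_cancel_left (hE.le hc)]
  by_cases hu' : u ∈ E
  · right
    refine ⟨hu', ?_⟩
    have h1 := hK₂ _ hp (by rw [hpr]; exact huE.2 hu')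
    rw [hpr] at h1
    have h2 := hL.mul_le (c * u * c'⁻¹) (c' * u⁻¹)
    have h3 := hL.mul_le c' u⁻¹
    rw [show c * u * c'⁻¹ * (c' * u⁻¹) = c by group] at h2
    rw [hL.inv] at h3
    omega
  · left
    have h1 := hK₁ _ hp (by rw [hpr]; exact fun h => hu' (huE.1 h)) c hc c' hc'
    rw [hpr, show c⁻¹ * (c * u * c'⁻¹) * c' = u by group] at h1
    omega

end IsHypLength

/-- Elements of a finitely generated subgroup have spellings which stay close to it. -/
theorem exists_finite_forall_take {X Y : Set G} (hX : IsFinSymm X) (hXt : Subgroup.closure X = ⊤)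
    (hY : IsFinSymm Y) : ∃ S : Set G, S.Finite ∧ 1 ∈ S ∧ ∀ h ∈ Subgroup.closure Y,
      ∃ W : List G, (∀ x ∈ W, x ∈ X) ∧ W.prod = h ∧
        ∀ n, ∃ a ∈ Subgroup.closure Y, ∃ s ∈ S, (W.take n).prod = a * s := by
  have hex : ∀ g : G, ∃ l : List G, (∀ x ∈ l, x ∈ X) ∧ l.prod = g := fun g =>
    exists_word_of_mem_closure hX.inv_mem (by rw [hXt]; trivial)
  choose w hw hwp using hex
  refine ⟨{1} ∪ ⋃ y ∈ Y, {x | x ∈ (w y).inits.map List.prod},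
    (Set.finite_singleton 1).union (hY.finite.biUnion fun y _ => List.finite_toSet _),
    Or.inl rfl, fun h hh => ?_⟩
  obtain ⟨V, hV, rfl⟩ := exists_word_of_mem_closure hY.inv_mem hh
  clear hh
  induction V with
  | nil => exact ⟨[], by simp, rfl, fun n => ⟨1, one_mem _, 1, Or.inl rfl, by simp⟩⟩
  | cons y V ih =>
    obtain ⟨W, hW, hWp, hWt⟩ := ih fun y hy => hV y (by simp [hy])
    refine ⟨w y ++ W, fun x hx => (List.mem_append.1 hx).elim (hw y x) (hW x),
      by simp [hwp, hWp], fun n => ?_⟩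
    have hy : y ∈ Y := hV y (by simp)
    rcases le_total n (w y).length with hn | hn
    · refine ⟨1, one_mem _, ((w y).take n).prod, Or.inr ?_, ?_⟩
      · simp only [Set.mem_iUnion]
        exact ⟨y, hy, List.mem_map.2 ⟨_, (List.mem_inits _ _).2 ⟨_, List.take_append_drop _ _⟩, rfl⟩⟩
      · rw [List.take_append_of_le_length hn, one_mul]
    · obtain ⟨a, ha, s, hs, h⟩ := hWt (n - (w y).length)
      refine ⟨y * a, mul_mem (Subgroup.subset_closure hy) ha, s, hs, ?_⟩
      rw [List.take_append, List.take_of_length_le hn, List.prod_append, hwp, h, mul_assoc]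

theorem exists_bounded_repr {H C : Subgroup G} {S : Set G} (hS : S.Finite) {z : G}
    (hz : (Subgroup.zpowers z).relIndex C ≠ 0) (L : G → ℕ) :
    ∃ B, ∀ s ∈ S, ∀ c ∈ C, ∃ q ∈ H, ∃ f ∈ C, s * c = q * s * f ∧
      (((C ⊓ conjSubgroup s⁻¹ H : Subgroup G) : Set G).Infinite → L f ≤ B) := by
  refine exists_forall_of_finite hS (p := fun s B => ∀ c ∈ C, ∃ q ∈ H, ∃ f ∈ C, s * c = q * s * f ∧
      (((C ⊓ conjSubgroup s⁻¹ H : Subgroup G) : Set G).Infinite → L f ≤ B)) ?_ fun s _ => ?_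
  · intro s m n hmn h c hc
    obtain ⟨q, hq, f, hf, h1, h2⟩ := h c hc
    exact ⟨q, hq, f, hf, h1, fun h => (h2 h).trans hmn⟩
  · by_cases hinf : ((C ⊓ conjSubgroup s⁻¹ H : Subgroup G) : Set G).Infinite
    · obtain ⟨F, hF, hFC, hFq⟩ := exists_finite_of_relIndex_ne_zero
        (relIndex_ne_zero_of_infinite hz inf_le_left hinf)
      obtain ⟨B, hB⟩ := (hF.image L).bddAbove
      refine ⟨B, fun c hc => ?_⟩
      obtain ⟨f, hf, q, hq, rfl⟩ := hFq c hc
      refine ⟨s⁻¹⁻¹ * q * s⁻¹, mem_conjSubgroup.1 hq.2, f, hFC hf, by group,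
        fun _ => hB ⟨f, hf, rfl⟩⟩
    · exact ⟨0, fun c hc => ⟨1, one_mem _, c, hc, by group, fun h => (hinf h).elim⟩⟩

/-- A finitely generated subgroup of an amalgam along a virtually cyclic subgroup is undistorted
if it meets all conjugates of the factors in undistorted subgroups. -/
theorem HasNormalForm.isUndistorted_of_inf_conjSubgroup {A : Bool → Subgroup G} {C : Subgroup G}
    (hA : HasNormalForm A C) {L : G → ℕ} {D : ℕ} (hL : IsHypLength L D)
    {X : Set G} (hX : IsFinSymm X) (hXt : Subgroup.closure X = ⊤) (hXA : ∀ x ∈ X, ∃ i, x ∈ A i)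
    {K₀ : ℕ} (hXL : ∀ g, wordLength X g ≤ K₀ * L g) {z : G}
    (hz : (Subgroup.zpowers z).relIndex C ≠ 0) (hC : IsGeomQC L C) {H : Subgroup G} (hH : H.FG)
    (hP : ∀ g i, IsUndistorted L (H ⊓ conjSubgroup g (A i))) : IsUndistorted L H := by
  obtain ⟨E, hE⟩ := hL.exists_isElementaryHull hz hC
  obtain ⟨N, hN⟩ := exists_window hE.relIndex_ne_zero
  obtain ⟨M, -, hM⟩ := hL.exists_le_mul_wordLength hX
  obtain ⟨Y₀, rfl⟩ := hH
  set Y : Set G := Y₀ ∪ (Y₀ : Set G)⁻¹ with hYdef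
  have hY : IsFinSymm Y := isFinSymm_union_inv Y₀.finite_toSet
  have hYH : Subgroup.closure Y = Subgroup.closure (Y₀ : Set G) := closure_union_inv _
  rw [← hYH] at hP ⊢
  set H := Subgroup.closure Y with hHdef
  have memX : ∀ g, g ∈ Subgroup.closure X := fun g => by rw [hXt]; trivial
  obtain ⟨S, hS, hS1, hSW⟩ := exists_finite_forall_take hX hXt hY
  obtain ⟨B, hB⟩ := exists_bounded_repr (H := H) hS hz L
  obtain ⟨K₁, hK₁⟩ := exists_forall_of_finite
    (S := S ×ˢ S ×ˢ (Set.univ : Set Bool)) (hS.prod (hS.prod Set.finite_univ))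
    (p := fun t K => ∀ h ∈ H, ∀ c ∈ C, ∀ c' ∈ C, ∀ u ∈ A t.2.2, h * t.2.1 * c' = t.1 * c * u →
      wordLength Y h ≤ K * (L c + L u + L c' + 1))
    (fun t m n hmn h x hx c hc c' hc' u hu heq =>
      (h x hx c hc c' hc' u hu heq).trans (Nat.mul_le_mul_right _ hmn))
    (fun t _ => hL.exists_step_wordLength_le hY rfl (hA.le t.2.2) t.1 t.2.1 (hP t.1 t.2.2))
  obtain ⟨K₂, hK₂⟩ := exists_forall_of_finite
    (S := S ×ˢ S ×ˢ (Set.univ : Set Bool)) (hS.prod (hS.prod Set.finite_univ))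
    (p := fun t K => ((C ⊓ conjSubgroup t.1⁻¹ H : Subgroup G) : Set G).Finite →
      ∀ h ∈ H, ∀ c ∈ C, ∀ c' ∈ C, ∀ u ∈ A t.2.2, h * t.2.1 * c' = t.1 * c * u →
      L c ≤ L u + K ∨ u ∈ E ∧ L c ≤ L u + K + L c')
    (fun t m n hmn h hf x hx c hc c' hc' u hu heq =>
      (h hf x hx c hc c' hc' u hu heq).imp (by omega) (And.imp_right (by omega)))
    (fun t _ => by
      by_cases hf : ((C ⊓ conjSubgroup t.1⁻¹ H : Subgroup G) : Set G).Finite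
      · obtain ⟨K, hK⟩ := hL.exists_step_le (hA.le t.2.2) hC hE t.1 t.2.1 (hP t.1 t.2.2) hf
        exact ⟨K, fun _ => hK⟩
      · exact ⟨0, fun h => (hf h).elim⟩)
  obtain ⟨K₃, hK₃⟩ := exists_wordLength_le_of_isUndistorted hY inf_le_left (hP 1 true)
  set T := N * (M + K₂ + B)
  refine ⟨Y, hY, rfl, K₁ * (2 * T + M + 1) * K₀ + K₃, fun h hh => ?_⟩
  obtain ⟨i, l, hl, hlC⟩ := hA.exists_isReducedList h
  by_cases hnil : l = []
  · subst hnil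
    have hhC : h ∈ C := by simpa using hlC
    have := hK₃ h ⟨hh, mem_conjSubgroup.2 (by simpa using hA.le true hhC)⟩
    refine this.trans (Nat.add_le_add (Nat.mul_le_mul_right _ ?_) ?_) <;> omega
  obtain ⟨W, hWl, hWX, hWp⟩ := exists_geodesic_word hX (memX h)
  obtain ⟨W', hWX', hWp', hW't⟩ := hSW h hh
  obtain ⟨p, hp0, hpk, hpC, -, hpsum⟩ :=
    hA.exists_cut hXA l i hl hnil W hWX (by rwa [hWp])
  obtain ⟨p', -, -, hpC', hp't, -⟩ :=
    hA.exists_cut hXA l i hl hnil W' hWX' (by rwa [hWp'])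
  set k := l.length with hkdef
  have hk0 : k ≠ 0 := by simpa [hkdef] using hnil
  have hrepr : ∀ j ≤ k, ∃ a ∈ H, ∃ s ∈ S, ∃ c ∈ C, p j = a * s * c ∧
      (((C ⊓ conjSubgroup s⁻¹ H : Subgroup G) : Set G).Infinite → L c ≤ B) ∧
      (j = 0 → a = 1) ∧ (j = k → a = h ∧ c = 1) := by
    intro j hj
    rcases eq_or_ne j 0 with rfl | hj0
    · exact ⟨1, one_mem _, 1, hS1, 1, one_mem _, by simp [hp0], by simp [hL.one], by simp,
        fun h => (hk0 h.symm).elim⟩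
    rcases eq_or_ne j k with rfl | hjk
    · exact ⟨h, hh, 1, hS1, 1, one_mem _, by simp [hpk, hWp], by simp [hL.one],
        fun h => (hk0 h).elim, by simp⟩
    obtain ⟨n, hn⟩ := hp't j
    obtain ⟨a, ha, s, hs, has⟩ := hW't n
    have hc : (p' j)⁻¹ * p j ∈ C := by
      have := mul_mem (inv_mem (hpC' j hj)) (hpC j hj)
      rwa [show ((l.take j).prod⁻¹ * p' j)⁻¹ * ((l.take j).prod⁻¹ * p j) = (p' j)⁻¹ * p j by
        group] at this
    obtain ⟨q, hq, f, hf, hqf, hfB⟩ := hB s hs _ hc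
    refine ⟨a * q, mul_mem ha hq, s, hs, f, hf, ?_, hfB, fun h => (hj0 h).elim,
      fun h => (hjk h).elim⟩
    rw [mul_assoc, mul_assoc, ← mul_assoc q, ← hqf, ← mul_assoc, ← has, ← hn, mul_inv_cancel_left]
  choose! a haH s hsS c hcC hpasc hcB ha0 hak using hrepr
  have hpnot : ∀ i j, i < j → j ≤ k → (p i)⁻¹ * p j ∉ C := by
    intro m n hmn hn hmem
    refine hA.prod_take_inv_mul_notMem l i m n hl hmn hn ?_
    have := mul_mem (mul_mem (hpC m (by omega)) hmem) (inv_mem (hpC n hn))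
    rwa [show (l.take m).prod⁻¹ * p m * ((p m)⁻¹ * p n) * ((l.take n).prod⁻¹ * p n)⁻¹ =
      (l.take m).prod⁻¹ * (l.take n).prod by group] at this
  have hu : ∀ j < k, ∃ e, (p j)⁻¹ * p (j + 1) ∈ A e := by
    intro j hj
    obtain ⟨e, he⟩ := exists_prod_take_inv_mul_mem l i j hl hj
    refine ⟨e, ?_⟩
    have := mul_mem (mul_mem (inv_mem (hA.le e (hpC j hj.le))) he) (hA.le e (hpC (j + 1) hj))
    rwa [show ((l.take j).prod⁻¹ * p j)⁻¹ * ((l.take j).prod⁻¹ * (l.take (j + 1)).prod) *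
      ((l.take (j + 1)).prod⁻¹ * p (j + 1)) = (p j)⁻¹ * p (j + 1) by group] at this
  choose! e he using hu
  have heq : ∀ j < k, (a j)⁻¹ * a (j + 1) * s (j + 1) * c (j + 1) =
      s j * c j * ((p j)⁻¹ * p (j + 1)) := by
    intro j hj
    rw [hpasc j hj.le, hpasc (j + 1) hj]
    group
  have hamem : ∀ j < k, (a j)⁻¹ * a (j + 1) ∈ H := fun j hj =>
    mul_mem (inv_mem (haH j hj.le)) (haH (j + 1) hj)
  have hck : L (c k) = 0 := by rw [(hak k le_rfl rfl).2, hL.one]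
  have hd := sum_range_le_of_chain (d := fun j => L (c j))
    (w := fun j => L ((p j)⁻¹ * p (j + 1)) + (K₂ + B))
    (e := fun j => (p j)⁻¹ * p (j + 1) ∈ E) (k := k) (N := N) hck
    (fun j hj => by
      by_cases hinf : ((C ⊓ conjSubgroup (s j)⁻¹ H : Subgroup G) : Set G).Finite
      · have := hK₂ (s j, s (j + 1), e j) ⟨hsS j hj.le, hsS (j + 1) hj, trivial⟩ hinf _
          (hamem j hj) _ (hcC j hj.le) _ (hcC (j + 1) hj) _ (he j hj) (heq j hj)
        exact this.imp (by omega) (And.imp_right (by omega))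
      · have := hcB j hj.le hinf
        left; omega)
    (hN p k hpnot)
  have hlen : wordLength Y h ≤ ∑ j ∈ Finset.range k,
      K₁ * (L (c j) + L ((p j)⁻¹ * p (j + 1)) + L (c (j + 1)) + 1) := by
    have h1 := wordLength_le_sum hY a k fun j hj => haH j hj
    rw [ha0 0 (by omega) rfl, (hak k le_rfl rfl).1, inv_one, one_mul] at h1
    refine h1.trans (Finset.sum_le_sum fun j hj => ?_)
    have hj := Finset.mem_range.1 hj
    exact hK₁ (s j, s (j + 1), e j) ⟨hsS j hj.le, hsS (j + 1) hj, trivial⟩ _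
      (hamem j hj) _ (hcC j hj.le) _ (hcC (j + 1) hj) _ (he j hj) (heq j hj)
  have hLu : ∑ j ∈ Finset.range k, L ((p j)⁻¹ * p (j + 1)) ≤ M * W.length := by
    refine le_trans ?_ (Nat.mul_le_mul_left M hpsum)
    rw [Finset.mul_sum]
    exact Finset.sum_le_sum fun j _ => hM _ (memX _)
  have hkW : k ≤ W.length := by
    refine le_trans ?_ hpsum
    calc k = ∑ j ∈ Finset.range k, 1 := by simp
      _ ≤ _ := Finset.sum_le_sum fun j hj => Nat.one_le_iff_ne_zero.2 fun h0 =>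
        hpnot j (j + 1) (by omega) (Finset.mem_range.1 hj) (by
          rw [eq_one_of_wordLength_eq_zero hX (memX _) h0]; exact one_mem _)
  have hshift : ∑ j ∈ Finset.range k, L (c (j + 1)) ≤ ∑ j ∈ Finset.range k, L (c j) := by
    have h1 := Finset.sum_range_succ (fun j => L (c j)) k
    have h2 := Finset.sum_range_succ' (fun j => L (c j)) k
    omega
  have hdT : ∑ j ∈ Finset.range k, L (c j) ≤ T * W.length := by
    refine hd.trans ?_
    rw [Finset.sum_add_distrib, Finset.sum_const, Finset.card_range, smul_eq_mul, mul_assoc]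
    refine Nat.mul_le_mul_left N ?_
    nlinarith [Nat.mul_le_mul_right (K₂ + B) hkW]
  have hWL : W.length ≤ K₀ * L h := hWl ▸ hXL h
  rw [← Finset.mul_sum] at hlen
  simp only [Finset.sum_add_distrib, Finset.sum_const, Finset.card_range, smul_eq_mul, mul_one]
    at hlen
  calc wordLength Y h ≤ K₁ * ((2 * T + M + 1) * W.length) :=
        hlen.trans (Nat.mul_le_mul_left _ (by nlinarith))
    _ ≤ K₁ * ((2 * T + M + 1) * (K₀ * L h)) := by gcongr
    _ = K₁ * (2 * T + M + 1) * K₀ * L h := by ring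
    _ ≤ _ := by rw [add_mul]; omega

theorem isQuasiconvex_iff_isUndistorted {X : Set G} (hX : IsSymmGen X) {H : Subgroup G} :
    IsQuasiconvex H ↔ IsUndistorted (wordLength X) H := by
  constructor
  · rintro ⟨Y, hY, Z, hZ, c, -, hc⟩
    obtain ⟨K, hK⟩ := exists_wordLength_le_mul (Y := X) (Z := Z) ⟨hX.1, hX.2.1⟩ ⟨hZ.1, hZ.2.1⟩
      (by rw [hZ.2.2]; exact Set.subset_univ X)
    obtain ⟨n, hn⟩ := exists_nat_ge c
    refine ⟨H.subtype '' Y, IsFinSymm.image _ ⟨hY.1, hY.2.1⟩, ?_, n * K + n, fun p hp => ?_⟩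
    · rw [← MonoidHom.map_closure, hY.2.2, ← MonoidHom.range_eq_map, Subgroup.range_subtype]
    · have h1 := wordLength_image H.subtype Subtype.val_injective Y ⟨p, hp⟩
      rw [Subgroup.subtype_apply] at h1
      rw [h1]
      have h2 : wordLength Y ⟨p, hp⟩ ≤ n * wordLength Z p + n := by
        have h3 : (wordLength Y ⟨p, hp⟩ : ℝ) ≤ n * wordLength Z p + n :=
          (hc ⟨p, hp⟩).trans (by gcongr)
        exact_mod_cast h3
      have h4 := Nat.mul_le_mul_left n (hK p (by rw [hX.2.2]; trivial))
      rw [add_mul, ← mul_assoc] at *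
      omega
  · rintro ⟨Y, hY, hYH, K, hK⟩
    obtain ⟨h1, h2⟩ := isSymmGen_preimage hY hYH
    refine ⟨_, h1, X, hX, K + 1, by positivity, fun a => ?_⟩
    rw [h2]
    have h3 : (wordLength Y (a : G) : ℝ) ≤ K * wordLength X (a : G) + K := by
      exact_mod_cast hK a a.2
    refine h3.trans ?_
    gcongr <;> simp

theorem IsHypLength.isQuasiconvex_subgroupOf_iff {L : G → ℕ} {D : ℕ} (hL : IsHypLength L D)
    {P B : Subgroup G} (hPB : P ≤ B) (hB : IsUndistorted L B) :
    IsQuasiconvex (P.subgroupOf B) ↔ IsUndistorted L P := by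
  obtain ⟨X, hX, hXB, K, hK⟩ := hB
  obtain ⟨hgen, hlen⟩ := isSymmGen_preimage hX hXB
  rw [isQuasiconvex_iff_isUndistorted hgen]
  constructor
  · rintro ⟨Y, hY, hYP, K', hK'⟩
    refine ⟨B.subtype '' Y, hY.image _, ?_, K' * K + K', fun p hp => ?_⟩
    · rw [← MonoidHom.map_closure, hYP, Subgroup.map_subgroupOf_eq_of_le hPB]
    · have h1 := wordLength_image B.subtype Subtype.val_injective Y ⟨p, hPB hp⟩
      rw [Subgroup.subtype_apply] at h1
      have h2 := hK' ⟨p, hPB hp⟩ (Subgroup.mem_subgroupOf.2 hp)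
      rw [hlen] at h2
      rw [h1]
      have h3 := Nat.mul_le_mul_left K' (hK p (hPB hp))
      simp only at h2
      nlinarith [Nat.zero_le (K' * L p)]
  · rintro ⟨Y, hY, hYP, K', hK'⟩
    obtain ⟨M, -, hM⟩ := hL.exists_le_mul_wordLength hX
    have himg : B.subtype '' ((↑) ⁻¹' Y : Set B) = Y := by
      rw [Subgroup.coe_subtype]
      exact Set.image_preimage_eq_of_subset fun y hy =>
        ⟨⟨y, hPB (hYP ▸ Subgroup.subset_closure hy)⟩, rfl⟩
    refine ⟨(↑) ⁻¹' Y, ⟨hY.finite.preimage Subtype.val_injective.injOn,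
      fun x hx => hY.inv_mem _ hx⟩, ?_, K' * M + K', fun p hp => ?_⟩
    · refine Subgroup.map_injective B.subtype_injective ?_
      rw [MonoidHom.map_closure, himg, hYP, Subgroup.map_subgroupOf_eq_of_le hPB]
    · have h1 := wordLength_image B.subtype Subtype.val_injective ((↑) ⁻¹' Y) p
      rw [himg, Subgroup.subtype_apply] at h1
      rw [← h1, hlen]
      have h2 := hK' p (Subgroup.mem_subgroupOf.1 hp)
      have h3 := Nat.mul_le_mul_left K' (hM p (by rw [hXB]; exact p.2))
      rw [add_mul, mul_assoc]
      omega

theorem conjSubgroup_inf_conjSubgroup_inv (g : G) (H B : Subgroup G) :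
    conjSubgroup g (conjSubgroup g⁻¹ H ⊓ B) = H ⊓ conjSubgroup g B := by
  ext x
  simp only [mem_conjSubgroup, Subgroup.mem_inf]
  rw [show g⁻¹⁻¹ * (g⁻¹ * x * g) * g⁻¹ = x by group]

end WordLength

/-- **Theorem B.** Quasiconvexity criterion for subgroups of an amalgam of hyperbolic
groups along a virtually cyclic subgroup. -/
theorem quasiconvex_iff_conj_inter_quasiconvex {G : Type u} [Group G]
    (A : Bool → Subgroup G) (C : Subgroup G)
    (hG : IsWordHyperbolic G)
    (amal : IsAmalgamatedFreeProduct (A true) (A false) C)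
    (hC : IsVirtuallyCyclic ↥C)
    (H : Subgroup G) (hH : H.FG) :
    IsQuasiconvex H ↔
      ∀ (g : G) (i : Bool),
        IsQuasiconvex ((H.map (MulAut.conj g⁻¹).toMonoidHom ⊓ A i).subgroupOf (A i)) := by
  obtain ⟨X₀, hX₀, δ, -, hδ⟩ := hG
  obtain ⟨D, hL⟩ := WordLength.isHypLength_wordLength hX₀ hδ
  have hA := WordLength.hasNormalForm_of_isAmalgamatedFreeProduct amal
  obtain ⟨z, hzC, hz⟩ := WordLength.IsVirtuallyCyclic.exists_zpowers hC
  obtain ⟨X, hX, hXt, hXA⟩ := hA.exists_isFinSymm hX₀.1 hX₀.2.2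
  obtain ⟨K₀, hK₀⟩ := WordLength.exists_wordLength_le_mul (Y := X₀) ⟨hX₀.1, hX₀.2.1⟩ hX
    (by rw [hXt]; exact Set.subset_univ X₀)
  have hXL : ∀ g, wordLength X g ≤ K₀ * wordLength X₀ g := fun g =>
    hK₀ g (by rw [hX₀.2.2]; trivial)
  have hCu : WordLength.IsUndistorted (wordLength X₀) C :=
    hL.isUndistorted_of_relIndex_ne_zero (Subgroup.zpowers_le.2 hzC) hz (hL.isUndistorted_zpowers z)
  have hAu := hA.isUndistorted_factor hL hX hXt hXA hXL hCu
  rw [WordLength.isQuasiconvex_iff_isUndistorted hX₀]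
  have hiff : ∀ g i, IsQuasiconvex ((H.map (MulAut.conj g⁻¹).toMonoidHom ⊓ A i).subgroupOf (A i)) ↔
      WordLength.IsUndistorted (wordLength X₀) (WordLength.conjSubgroup g⁻¹ H ⊓ A i) := fun g i =>
    hL.isQuasiconvex_subgroupOf_iff inf_le_right (hAu i)
  simp only [hiff]
  refine ⟨fun h g i => ?_, fun h => ?_⟩
  · exact hL.isUndistorted_of_isGeomQC (hL.isGeomQC_inf
      (hL.isGeomQC_of_isUndistorted (hL.isUndistorted_conjSubgroup h g⁻¹))
      (hL.isGeomQC_of_isUndistorted (hAu i)))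
  · refine hA.isUndistorted_of_inf_conjSubgroup hL hX hXt hXA hXL hz
      (hL.isGeomQC_of_isUndistorted hCu) hH fun g i => ?_
    rw [← WordLength.conjSubgroup_inf_conjSubgroup_inv]
    exact hL.isUndistorted_conjSubgroup (h g i) g
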